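/- arXiv:1710.10838 — 2 statements merged into one kernel-verified Lean document; each statement's English description precedes it below -/
import Mathlib

section
/- Let k ≥ 7 with k ≡ 3 (mod 4), and let M be the 𝔽₂ A_k-module obtained as the reduction mod 2 of the Specht module S^(k-2,2). Then every nonsplit extension 1 → M → H → A_k → 1 corresponding to a nonzero class in H²(A_k, M) yields a group H possessing a faithful transitive permutation representation of degree 2k(k-1). -/
open Pointwise

/-- Permutation representation of `G` on `X → F` from an action of `G` on `X`. -/
def permRep (F G X : Type*) [CommRing F] [Group G] [MulAction G X] :
    Representation F G (X → F) where
  toFun g := LinearMap.funLeft F F (fun x => g⁻¹ • x)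
  map_one' := by ext v x; simp
  map_mul' g h := by ext v x; simp [LinearMap.funLeft, mul_smul]

variable {F G V : Type*} [CommRing F] [Group G] [AddCommGroup V] [Module F V]

/-- A submodule invariant under a representation. -/
def InvSub (ρ : Representation F G V) (U : Submodule F V) : Prop :=
  ∀ g, ∀ v ∈ U, ρ g v ∈ U

/-- The subrepresentation on an invariant submodule. -/
def subRep (ρ : Representation F G V) (U : Submodule F V)
    (hU : InvSub ρ U) : Representation F G U where
  toFun g := (ρ g).restrict (hU g)
  map_one' := by ext v; simp [LinearMap.restrict_apply]
  map_mul' g h := by ext v; simp [LinearMap.restrict_apply]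

/-- The set of 2-element subsets of `{1,…,k}`. -/
def Xk (k : ℕ) := {s : Finset (Fin k) // s.card = 2}

instance (k : ℕ) : Fintype (Xk k) := Subtype.fintype _
instance (k : ℕ) : DecidableEq (Xk k) := Subtype.instDecidableEq

instance (k : ℕ) : MulAction (Equiv.Perm (Fin k)) (Xk k) where
  smul g s := ⟨g • s.1, by rw [Finset.card_smul_finset]; exact s.2⟩
  one_smul s := Subtype.ext (one_smul _ s.1)
  mul_smul g h s := Subtype.ext (mul_smul g h s.1)

/-- The linear functional `v ↦ ∑_s w s * v s`. -/
noncomputable def formMap {X : Type*} [Fintype X] [DecidableEq X] (F : Type*) [CommRing F]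
    (w : X → F) : (X → F) →ₗ[F] F :=
  ∑ q : X, w q • (LinearMap.proj q : (X → F) →ₗ[F] F)

/-- Orthogonal complement of `U` with respect to the standard form. -/
noncomputable def perpSub {X : Type*} [Fintype X] [DecidableEq X] (F : Type*) [CommRing F]
    (U : Submodule F (X → F)) : Submodule F (X → F) :=
  ⨅ w : U, LinearMap.ker (formMap F (w : X → F))

/-- The orthogonal complement of an invariant submodule is invariant. -/
lemma perpSub_inv {X : Type*} [Fintype X] [DecidableEq X]
    (F G : Type*) [CommRing F] [Group G] [MulAction G X]
    (U : Submodule F (X → F)) (hU : InvSub (permRep F G X) U) :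
    InvSub (permRep F G X) (perpSub F U) := by
  intro g v hv
  have hv2 : ∀ w : U, ∑ q : X, (w : X → F) q * v q = 0 := by
    intro w
    have h2 := hv
    rw [perpSub] at h2
    have := (Submodule.mem_iInf _).mp h2 w
    simpa only [LinearMap.mem_ker, formMap, LinearMap.sum_apply,
      LinearMap.smul_apply, LinearMap.proj_apply, smul_eq_mul] using this
  rw [perpSub]
  refine (Submodule.mem_iInf _).mpr fun w => ?_
  simp only [LinearMap.mem_ker, formMap, LinearMap.sum_apply,
    LinearMap.smul_apply, LinearMap.proj_apply, smul_eq_mul]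
  calc ∑ q : X, (w : X → F) q * permRep F G X g v q
      = ∑ q : X, (w : X → F) (g • q) * v q := by
        exact Fintype.sum_equiv (MulAction.toPerm g).symm _ _ (fun q => by
          simp [MulAction.toPerm, permRep, LinearMap.funLeft])
    _ = 0 := by
        have hw : permRep F G X g⁻¹ (w : X → F) ∈ U := hU g⁻¹ w w.2
        have := hv2 ⟨_, hw⟩
        rw [← this]
        exact Finset.sum_congr rfl fun q _ => by
          simp [permRep, LinearMap.funLeft]

/-- `f = Σ_{i<j} e_{ij}`: the all-ones vector. -/
def allOnes (k : ℕ) : Xk k → ZMod 2 := fun _ => 1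

/-- `x_i = Σ_j e_{ij}`. -/
def xVec (k : ℕ) (i : Fin k) : Xk k → ZMod 2 := fun s => if i ∈ s.1 then 1 else 0

def P1 (k : ℕ) : Submodule (ZMod 2) (Xk k → ZMod 2) :=
  Submodule.span (ZMod 2) {allOnes k}

def P2 (k : ℕ) : Submodule (ZMod 2) (Xk k → ZMod 2) :=
  Submodule.span (ZMod 2) (Set.range (xVec k))

lemma P1_sup_P2_inv (k : ℕ) :
    InvSub (permRep (ZMod 2) (alternatingGroup (Fin k)) (Xk k)) (P1 k ⊔ P2 k) := by
  intro g v hv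
  have : (P1 k ⊔ P2 k).map (permRep (ZMod 2) (alternatingGroup (Fin k)) (Xk k) g)
      ≤ P1 k ⊔ P2 k := by
    rw [Submodule.map_sup, P1, P2, Submodule.map_span, Submodule.map_span]
    refine sup_le_sup (Submodule.span_le.mpr ?_) (Submodule.span_le.mpr ?_)
    · rintro - ⟨w, rfl, rfl⟩
      exact Submodule.subset_span rfl
    · rintro - ⟨-, ⟨i, rfl⟩, rfl⟩
      refine Submodule.subset_span ⟨(g : Equiv.Perm (Fin k)) i, ?_⟩
      funext s
      show xVec k ((g : Equiv.Perm (Fin k)) i) s = xVec k i (g⁻¹ • s)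
      have hmem : ((g : Equiv.Perm (Fin k)) i ∈ s.1) ↔ (i ∈ ((g⁻¹ • s : Xk k)).1) := by
        show _ ↔ i ∈ (g : Equiv.Perm (Fin k))⁻¹ • s.1
        rw [Finset.mem_inv_smul_finset_iff]
        exact Iff.rfl
      simp only [xVec, hmem]
  exact this ⟨v, hv, rfl⟩

/-- `P₃ = (P₁ + P₂)^⊥ ≅ S^(k-2,2)`, with its `A_k`-representation. -/
noncomputable def P3Rep (k : ℕ) :
    Representation (ZMod 2) (alternatingGroup (Fin k))
      (perpSub (ZMod 2) (P1 k ⊔ P2 k)) :=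
  subRep _ _ (perpSub_inv (ZMod 2) (alternatingGroup (Fin k)) _ (P1_sup_P2_inv k))

/-!
Let `ρ : H → A_k` be the projection, with kernel `M`, and fix a 2-subset `P`. The elements of `M`
whose coordinate at `P` vanishes form a subgroup `M_P` of index 2 in `M`, normalized by the
preimage of the stabilizer of `P`. Modulo `M_P` the projection splits over the alternating group of
the complement of `P`, so there is `H₀` with `H₀ ∩ M = M_P` and `ρ(H₀) = Alt(Pᶜ) ≅ A_{k-2}`. Its
index is `[M : M_P] [A_k : A_{k-2}] = 2k(k-1)`. Its core fixes every point, hence lies in `M`, and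
has zero coordinate at every 2-subset, hence is trivial.

For the splitting, lift the 3-cycles `(c d i)`, with `c` and `d` fixed, to elements `y i` of order
3, which is possible because `M` is an elementary abelian 2-group. By Carmichael's presentation of
the alternating group it is enough that `(y i * y j) ^ 2 ∈ M_P`. Here `h = y i * y j` lifts a double
transposition `t` whose support is disjoint from `P`. Replacing `h` by another lift `h * ν` adds
`ν + t ν` to `h ^ 2 ∈ M`, which does not affect the coordinates at 2-subsets fixed by `t`; those
coordinates are therefore invariant under the centralizer of `t` in `A_k`. In particular the
coordinates at the `(k-4).choose 2` 2-subsets disjoint from the support of `t` are all equal. These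
are exactly the 2-subsets fixed by the Klein four-group on that support, so modulo 2 their
sum is the sum of all coordinates of `h ^ 2`, which is zero. Since `(k-4).choose 2` is odd, each of
them vanishes.
-/

section Carmichael

variable {ι Q : Type*} [Group Q] {y : ι → Q} {S : Set ι} {x : ι}

/-- The relations of Carmichael's presentation of the alternating group on `|S| + 2` letters
`c`, `d` and `i ∈ S`, in which `y i` stands for the 3-cycle `c ↦ d ↦ i ↦ c`. -/
structure CarmichaelRelations (y : ι → Q) (S : Set ι) : Prop where
  pow_three_eq_one : ∀ i ∈ S, y i ^ 3 = 1
  mul_sq_eq_one : S.Pairwise fun i j => (y i * y j) ^ 2 = 1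

/-- Right coset representatives of `⟨y j : j ∈ S⟩` in `⟨y j : j ∈ S ∪ {x}⟩` when the `y j` satisfy
Carmichael's relations. -/
def carmichaelReps (y : ι → Q) (S : Set ι) (x : ι) : Set Q :=
  {1, y x, (y x)⁻¹} ∪ (fun j => (y x)⁻¹ * y j) '' S

namespace CarmichaelRelations

lemma mono {T : Set ι} (h : CarmichaelRelations y T) (hST : S ⊆ T) : CarmichaelRelations y S :=
  ⟨fun i hi => h.pow_three_eq_one i (hST hi), h.mul_sq_eq_one.mono hST⟩

lemma mul_self (h : CarmichaelRelations y S) {i : ι} (hi : i ∈ S) : y i * y i = (y i)⁻¹ :=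
  eq_inv_of_mul_eq_one_left (by rw [← h.pow_three_eq_one i hi, pow_succ, pow_two])

lemma inv_mul_inv (h : CarmichaelRelations y S) {i : ι} (hi : i ∈ S) :
    (y i)⁻¹ * (y i)⁻¹ = y i := by
  rw [← mul_inv_rev, h.mul_self hi, inv_inv]

lemma mul_eq_inv_mul_inv (h : CarmichaelRelations y S) {i j : ι} (hi : i ∈ S) (hj : j ∈ S)
    (hij : i ≠ j) : y i * y j = (y j)⁻¹ * (y i)⁻¹ := by
  rw [← mul_inv_rev]
  exact eq_inv_of_mul_eq_one_left (by rw [← pow_two, h.mul_sq_eq_one hi hj hij])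

lemma mul_inv_eq (h : CarmichaelRelations y S) {i j : ι} (hi : i ∈ S) (hj : j ∈ S)
    (hij : i ≠ j) : y i * (y j)⁻¹ = (y j)⁻¹ * ((y i)⁻¹ * y j) := by
  rw [← h.mul_self hj, ← mul_assoc, h.mul_eq_inv_mul_inv hi hj hij, h.mul_self hj, mul_assoc]

lemma exists_mul_eq_mul_of_mem_carmichaelReps (h : CarmichaelRelations y (insert x S))
    (hx : x ∉ S) {r : Q} (hr : r ∈ carmichaelReps y S x) {i : ι} (hi : i ∈ insert x S) :
    ∃ κ ∈ Subgroup.closure (y '' S), ∃ r' ∈ carmichaelReps y S x, κ * r' = r * y i := by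
  have hmem {j : ι} (hj : j ∈ S) : y j ∈ Subgroup.closure (y '' S) :=
    Subgroup.subset_closure ⟨j, hj, rfl⟩
  have hxx := Set.mem_insert x S
  have hxj {j : ι} (hj : j ∈ S) : x ≠ j := fun e => hx (e ▸ hj)
  have hS {j : ι} (hj : j ∈ S) : j ∈ insert x S := Set.mem_insert_of_mem x hj
  have hreps {j : ι} (hj : j ∈ S) : (y x)⁻¹ * y j ∈ carmichaelReps y S x := Or.inr ⟨j, hj, rfl⟩
  rcases hr with (rfl | rfl | rfl) | ⟨j, hj, rfl⟩ <;> rcases hi with rfl | hi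
  · exact ⟨1, one_mem _, y i, by simp [carmichaelReps], rfl⟩
  · exact ⟨y i, hmem hi, 1, by simp [carmichaelReps], by simp⟩
  · exact ⟨1, one_mem _, (y i)⁻¹, by simp [carmichaelReps], by rw [one_mul, h.mul_self hxx]⟩
  · exact ⟨(y i)⁻¹, inv_mem (hmem hi), (y x)⁻¹, by simp [carmichaelReps],
      (h.mul_eq_inv_mul_inv hxx (hS hi) (hxj hi)).symm⟩
  · exact ⟨1, one_mem _, 1, by simp [carmichaelReps], by simp⟩
  · exact ⟨1, one_mem _, (y x)⁻¹ * y i, hreps hi, one_mul _⟩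
  · refine ⟨(y j)⁻¹, inv_mem (hmem hj), (y i)⁻¹ * y j, hreps hj, ?_⟩
    rw [mul_assoc _ (y j), h.mul_eq_inv_mul_inv (hS hj) hxx (hxj hj).symm,
      ← mul_assoc (y i)⁻¹ (y i)⁻¹, h.inv_mul_inv hxx, h.mul_inv_eq hxx (hS hj) (hxj hj)]
  · rcases eq_or_ne i j with rfl | hij
    · refine ⟨y i, hmem hi, y x, by simp [carmichaelReps], ?_⟩
      rw [mul_assoc, h.mul_self (hS hi), h.mul_eq_inv_mul_inv (hS hi) hxx (hxj hi).symm]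
    · refine ⟨y i * (y j)⁻¹, mul_mem (hmem hi) (inv_mem (hmem hj)), (y x)⁻¹ * y j, hreps hj, ?_⟩
      calc y i * (y j)⁻¹ * ((y x)⁻¹ * y j)
          = y i * (y x * (y j)⁻¹) := by rw [h.mul_inv_eq hxx (hS hj) (hxj hj), mul_assoc]
        _ = (y x)⁻¹ * ((y i)⁻¹ * (y j)⁻¹) := by
          rw [← mul_assoc, h.mul_eq_inv_mul_inv (hS hi) hxx (hxj hi).symm, mul_assoc]
        _ = (y x)⁻¹ * y j * y i := by
          rw [← h.mul_eq_inv_mul_inv (hS hj) (hS hi) hij.symm, mul_assoc]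

lemma closure_insert_subset (h : CarmichaelRelations y (insert x S)) (hx : x ∉ S) :
    (Subgroup.closure (y '' insert x S) : Set Q) ⊆
      (Subgroup.closure (y '' S) : Set Q) * carmichaelReps y S x := by
  have mul_mem' {g : Q} (hg : g ∈ (Subgroup.closure (y '' S) : Set Q) * carmichaelReps y S x)
      {i : ι} (hi : i ∈ insert x S) :
      g * y i ∈ (Subgroup.closure (y '' S) : Set Q) * carmichaelReps y S x := by
    obtain ⟨κ, hκ, r, hr, rfl⟩ := hg
    obtain ⟨κ', hκ', r', hr', e⟩ := h.exists_mul_eq_mul_of_mem_carmichaelReps hx hr hi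
    exact ⟨κ * κ', mul_mem hκ hκ', r', hr', by simp only [mul_assoc, e]⟩
  intro g hg
  induction hg using Subgroup.closure_induction_right with
  | one => exact ⟨1, one_mem _, 1, by simp [carmichaelReps], one_mul 1⟩
  | mul_right g _ s hs ih =>
    obtain ⟨i, hi, rfl⟩ := hs
    exact mul_mem' ih hi
  | mul_inv_cancel g _ s hs ih =>
    obtain ⟨i, hi, rfl⟩ := hs
    rw [← h.mul_self hi, ← mul_assoc]
    exact mul_mem' (mul_mem' ih hi) hi

lemma encard_carmichaelReps_le : (carmichaelReps y S x).encard ≤ S.encard + 3 := by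
  have hthree : ({1, y x, (y x)⁻¹} : Set Q).encard ≤ 3 := calc
    _ ≤ ({y x, (y x)⁻¹} : Set Q).encard + 1 := Set.encard_insert_le _ _
    _ ≤ ({(y x)⁻¹} : Set Q).encard + 1 + 1 := add_le_add_left (Set.encard_insert_le _ _) 1
    _ = 3 := by rw [Set.encard_singleton]; rfl
  rw [add_comm]
  exact (Set.encard_union_le _ _).trans (add_le_add hthree (Set.encard_image_le _ _))

theorem two_mul_encard_closure_le {S : Finset ι} (h : CarmichaelRelations y (S : Set ι)) :
    2 * (Subgroup.closure (y '' S) : Set Q).encard ≤ (S.card + 2).factorial := by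
  classical
  induction S using Finset.induction_on with
  | empty => simp
  | insert x S hx ih =>
    rw [Finset.coe_insert] at h ⊢
    have hreps : (carmichaelReps y (S : Set ι) x).encard ≤ (S.card + 3 : ℕ) := by
      simpa using encard_carmichaelReps_le (y := y) (S := (S : Set ι)) (x := x)
    calc 2 * (Subgroup.closure (y '' insert x (S : Set ι)) : Set Q).encard
        ≤ 2 * ((Subgroup.closure (y '' S) : Set Q) * carmichaelReps y (S : Set ι) x).encard := by
          gcongr
          exact h.closure_insert_subset (by simpa using hx)
      _ ≤ 2 * ((Subgroup.closure (y '' S) : Set Q) ×ˢ carmichaelReps y (S : Set ι) x).encard := by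
          rw [← Set.image_mul_prod]
          gcongr
          exact Set.encard_image_le _ _
      _ ≤ 2 * (Subgroup.closure (y '' S) : Set Q).encard * (S.card + 3 : ℕ) := by
          rw [Set.encard_prod, mul_assoc]
          gcongr
      _ ≤ (S.card + 2).factorial * (S.card + 3 : ℕ) := by
          gcongr
          exact ih (h.mono (Set.subset_insert _ _))
      _ = ((insert x S).card + 2).factorial := by
          rw [Finset.card_insert_of_notMem hx, mul_comm, ← Nat.cast_mul]
          exact congrArg _ (Nat.factorial_succ _).symm

theorem disjoint_closure_ker {R : Type*} [Group R] {S : Finset ι} (h : CarmichaelRelations y S)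
    (f : Q →* R)
    (hcard : (S.card + 2).factorial ≤ 2 * (Subgroup.closure (f ∘ y '' S) : Set R).encard) :
    Disjoint (Subgroup.closure (y '' S)) f.ker := by
  set T := Subgroup.closure (y '' S)
  have hupper : 2 * (T : Set Q).encard ≤ (S.card + 2).factorial := h.two_mul_encard_closure_le
  have hfin : (T : Set Q).Finite :=
    Set.finite_of_encard_le_coe ((le_mul_of_one_le_left' one_le_two).trans hupper)
  have hle : (T : Set Q).encard ≤ (f '' T).encard := by
    rw [Set.image_comp, ← MonoidHom.map_closure, Subgroup.coe_map] at hcard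
    exact (ENat.mul_le_mul_left_iff two_ne_zero (by simp)).mp (hupper.trans hcard)
  have hinj : Set.InjOn f T :=
    hfin.injOn_of_encard_image_eq ((Set.encard_image_le f T).antisymm hle)
  rw [Subgroup.disjoint_def]
  exact fun {x} hxT hxf => hinj hxT (one_mem T) (hxf.trans (map_one f).symm)

end CarmichaelRelations

end Carmichael

section Generation

open Equiv

variable {α : Type*} [DecidableEq α]

lemma closure_range_swap_eq_top [Finite α] (d : α) :
    Subgroup.closure (Set.range (swap d)) = ⊤ := by
  have hmem (x : α) : swap d x ∈ Subgroup.closure (Set.range (swap d)) :=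
    Subgroup.subset_closure ⟨x, rfl⟩
  rw [eq_top_iff, ← Perm.closure_isSwap, Subgroup.closure_le]
  rintro _ ⟨x, y, hxy, rfl⟩
  rcases eq_or_ne d x with rfl | hdx
  · exact hmem y
  rw [swap_comm x y, ← swap_mul_swap_mul_swap hdx.symm hxy, swap_comm x d]
  exact mul_mem (mul_mem (hmem y) (hmem x)) (hmem y)

lemma closure_swap_mul_swap_eq_alternatingGroup [Fintype α] {c d : α} (hcd : c ≠ d) :
    Subgroup.closure ((fun i => swap d c * swap d i) '' {c, d}ᶜ) = alternatingGroup α := by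
  set T := Subgroup.closure ((fun i => swap d c * swap d i) '' {c, d}ᶜ)
  have hT_le : T ≤ alternatingGroup α := by
    rw [Subgroup.closure_le]
    rintro _ ⟨i, hi, rfl⟩
    rw [Set.mem_compl_iff, Set.mem_insert_iff, Set.mem_singleton_iff, not_or] at hi
    exact (Perm.isThreeCycle_swap_mul_swap_same hcd.symm (Ne.symm hi.2)
      (Ne.symm hi.1)).mem_alternatingGroup
  have hgen {i : α} (hi : i ≠ d) : swap d c * swap d i ∈ T := by
    rcases eq_or_ne i c with rfl | hic
    · rw [swap_mul_self]; exact one_mem T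
    · exact Subgroup.subset_closure ⟨i, by simp [hi, hic], rfl⟩
  have hcoset (g : Perm α) : g ∈ T ∨ g * swap d c ∈ T := by
    have hg : g ∈ Subgroup.closure (Set.range (swap d)) :=
      closure_range_swap_eq_top d ▸ Subgroup.mem_top g
    have hstep {g : Perm α} (ih : g ∈ T ∨ g * swap d c ∈ T) (i : α) :
        g * swap d i ∈ T ∨ g * swap d i * swap d c ∈ T := by
      rcases eq_or_ne i d with rfl | hi
      · rwa [swap_self, ← Perm.one_def, mul_one]
      rcases ih with ih | ih
      · right
        rw [mul_assoc]
        refine mul_mem ih ?_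
        simpa using inv_mem (hgen hi)
      · left
        simpa [← mul_assoc] using mul_mem ih (hgen hi)
    induction hg using Subgroup.closure_induction_right with
    | one => exact Or.inl (one_mem T)
    | mul_right g _ s hs ih => obtain ⟨i, rfl⟩ := hs; exact hstep ih i
    | mul_inv_cancel g _ s hs ih => obtain ⟨i, rfl⟩ := hs; rw [swap_inv]; exact hstep ih i
  refine le_antisymm hT_le fun g hg => (hcoset g).resolve_right fun hgc => ?_
  have hsign := Perm.mem_alternatingGroup.mp (hT_le hgc)
  rw [map_mul, Perm.mem_alternatingGroup.mp hg, Perm.sign_swap hcd.symm] at hsign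
  exact absurd hsign (by decide)

lemma closure_swap_mul_swap_eq_map_alternatingGroup {U : Finset α} {c d : α} (hc : c ∈ U)
    (hd : d ∈ U) (hcd : c ≠ d) :
    Subgroup.closure ((fun i => swap d c * swap d i) '' (U \ {c, d} : Finset α)) =
      (alternatingGroup U).map Perm.ofSubtype := by
  have hcd' : (⟨c, hc⟩ : U) ≠ ⟨d, hd⟩ := fun h => hcd (congrArg Subtype.val h)
  rw [← closure_swap_mul_swap_eq_alternatingGroup hcd', MonoidHom.map_closure]
  congr 1
  rw [Set.image_image]
  ext g
  constructor
  · rintro ⟨i, hi, rfl⟩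
    obtain ⟨hiU, hic⟩ := Finset.mem_sdiff.mp (Finset.mem_coe.mp hi)
    exact ⟨⟨i, hiU⟩, by simpa [← Subtype.coe_inj] using hic, by simp⟩
  · rintro ⟨i, hi, rfl⟩
    exact ⟨i, by simpa [← Subtype.coe_inj] using hi, by simp⟩

lemma two_mul_card_map_alternatingGroup {U : Finset α} (hU : 1 < U.card) :
    2 * Nat.card ((alternatingGroup U).map (Perm.ofSubtype (p := (· ∈ U)))) =
      U.card.factorial := by
  have : Nontrivial U := Fintype.one_lt_card_iff_nontrivial.mp (by rwa [Fintype.card_coe])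
  rw [Subgroup.card_map_of_injective Perm.ofSubtype_injective, two_mul_nat_card_alternatingGroup,
    Nat.card_perm, Nat.card_eq_fintype_card, Fintype.card_coe]

end Generation

section Splitting

open Equiv

variable {α L : Type*} [DecidableEq α] [Group L]

theorem exists_inf_ker_eq_and_map_eq_map_alternatingGroup (ρ : L →* Perm α) (M : Subgroup L)
    [M.Normal] (hM : M ≤ ρ.ker) {U : Finset α} {c d : α} (hc : c ∈ U) (hd : d ∈ U) (hcd : c ≠ d)
    (y : α → L) (hρ : ∀ i ∈ U \ {c, d}, ρ (y i) = swap d c * swap d i)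
    (hcube : ∀ i ∈ U \ {c, d}, y i ^ 3 ∈ M)
    (hsq : ∀ i ∈ U \ {c, d}, ∀ j ∈ U \ {c, d}, i ≠ j → (y i * y j) ^ 2 ∈ M) :
    ∃ D : Subgroup L, D ⊓ ρ.ker = M ∧ D.map ρ = (alternatingGroup U).map Perm.ofSubtype := by
  set S := U \ {c, d}
  have hS : S.card + 2 = U.card := by
    rw [← Finset.card_pair hcd]
    exact Finset.card_sdiff_add_card_eq_card (by simp [Finset.insert_subset_iff, hc, hd])
  let q := QuotientGroup.mk' M
  let f : L ⧸ M →* Perm α := QuotientGroup.lift M ρ hM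
  have hrel : CarmichaelRelations (q ∘ y) S := by
    constructor
    · intro i hi
      rw [Function.comp_apply, ← map_pow]
      exact (QuotientGroup.eq_one_iff _).mpr (hcube i hi)
    · intro i hi j hj hij
      rw [Function.comp_apply, Function.comp_apply, ← map_mul, ← map_pow]
      exact (QuotientGroup.eq_one_iff _).mpr (hsq i hi j hj hij)
  have hclosure : Subgroup.closure (f ∘ q ∘ y '' S) = (alternatingGroup U).map Perm.ofSubtype := by
    rw [← closure_swap_mul_swap_eq_map_alternatingGroup hc hd hcd]
    exact congrArg _ (Set.image_congr hρ)
  have hdisj := hrel.disjoint_closure_ker f <| by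
    rw [hclosure, hS,
      ← two_mul_card_map_alternatingGroup (Finset.one_lt_card.mpr ⟨c, hc, d, hd, hcd⟩)]
    push_cast
    gcongr
    exact Set.ncard_le_encard _
  refine ⟨(Subgroup.closure (q ∘ y '' S)).comap q, le_antisymm ?_ ?_, ?_⟩
  · rintro x ⟨hx, hxρ⟩
    exact (QuotientGroup.eq_one_iff x).mp (Subgroup.disjoint_def.mp hdisj hx hxρ)
  · intro x hx
    refine ⟨?_, hM hx⟩
    have hqx : q x = 1 := (QuotientGroup.eq_one_iff x).mpr hx
    exact Subgroup.mem_comap.mpr (hqx ▸ one_mem _)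
  · rw [← hclosure, Set.image_comp f, ← MonoidHom.map_closure]
    have hfq : f.comp q = ρ := MonoidHom.ext fun _ => rfl
    rw [← hfq, ← Subgroup.map_map,
      Subgroup.map_comap_eq_self_of_surjective (QuotientGroup.mk'_surjective M)]

end Splitting

section Pairs

open Equiv

variable {k : ℕ}

lemma sum_eq_sum_filter_fixed {ι R : Type*} [DecidableEq ι] [Semiring R] [CharP R 2] {s : Finset ι}
    {σ : ι → ι} (hσ : ∀ i ∈ s, σ i ∈ s) (hinv : ∀ i ∈ s, σ (σ i) = i) {f : ι → R}
    (hf : ∀ i ∈ s, f (σ i) = f i) : ∑ i ∈ s, f i = ∑ i ∈ s with σ i = i, f i := by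
  rw [← Finset.sum_filter_add_sum_filter_not s (fun i => σ i = i)]
  refine (congrArg _ ?_).trans (add_zero _)
  refine Finset.sum_involution (fun i _ => σ i) ?_ ?_ ?_ ?_
  · intro i hi
    rw [hf i (Finset.mem_of_mem_filter i hi), CharTwo.add_self_eq_zero]
  · exact fun i hi _ => (Finset.mem_filter.mp hi).2
  · intro i hi
    obtain ⟨his, hne⟩ := Finset.mem_filter.mp hi
    exact Finset.mem_filter.mpr ⟨hσ i his, fun h => hne (by rwa [hinv i his, eq_comm] at h)⟩
  · exact fun i hi => hinv i (Finset.mem_of_mem_filter i hi)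

lemma Xk.smul_eq_self_of_fixed {g : Perm (Fin k)} {P : Xk k} (h : ∀ i ∈ P.1, g i = i) :
    g • P = P :=
  Subtype.ext ((Finset.image_congr h).trans Finset.image_id)

lemma Xk.apply_mem_iff_of_smul_eq_self {g : Perm (Fin k)} {P : Xk k} (h : g • P = P) (i : Fin k) :
    g i ∈ P.1 ↔ i ∈ P.1 := by
  conv_lhs => rw [← congrArg Subtype.val h]
  exact Finset.smul_mem_smul_finset_iff g

lemma Xk.exists_even_smul_eq {B : Finset (Fin k)} {P Q : Xk k} (hP : Disjoint P.1 B)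
    (hQ : Disjoint Q.1 B) :
    ∃ g ∈ alternatingGroup (Fin k), (∀ i ∈ B, g i = i) ∧ g • P = Q := by
  obtain ⟨u, v, huv, hP_eq⟩ := Finset.card_eq_two.mp P.2
  obtain ⟨a, b, hab, hQ_eq⟩ := Finset.card_eq_two.mp Q.2
  rw [hP_eq, Finset.disjoint_insert_left, Finset.disjoint_singleton_left] at hP
  rw [hQ_eq, Finset.disjoint_insert_left, Finset.disjoint_singleton_left] at hQ
  have huv' : (⟨u, hP.1⟩ : {i // i ∉ B}) ≠ ⟨v, hP.2⟩ := by simpa using huv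
  have hab' : (⟨a, hQ.1⟩ : {i // i ∉ B}) ≠ ⟨b, hQ.2⟩ := by simpa using hab
  obtain ⟨g, hgu, hgv⟩ := MulAction.is_two_pretransitive_iff.mp
    (Perm.isMultiplyPretransitive {i // i ∉ B} 2) huv' hab'
  have hg : Perm.ofSubtype g • P = Q := by
    refine Subtype.ext ?_
    change Perm.ofSubtype g • P.1 = Q.1
    rw [hP_eq, hQ_eq, Finset.smul_finset_insert, Finset.smul_finset_singleton, Perm.smul_def,
      Perm.smul_def, Perm.ofSubtype_apply_of_mem g hP.1, Perm.ofSubtype_apply_of_mem g hP.2,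
      ← Perm.smul_def g, ← Perm.smul_def g, hgu, hgv]
  have hfix (i : Fin k) (hi : i ∈ B) : Perm.ofSubtype g i = i :=
    Perm.ofSubtype_apply_of_not_mem g (not_not.mpr hi)
  rcases Int.units_eq_one_or (Perm.sign (Perm.ofSubtype g)) with hsign | hsign
  · exact ⟨Perm.ofSubtype g, hsign, hfix, hg⟩
  · refine ⟨swap a b * Perm.ofSubtype g, ?_, fun i hi => ?_, ?_⟩
    · rw [Perm.mem_alternatingGroup, map_mul, hsign, Perm.sign_swap hab, neg_mul_neg, one_mul]
    · rw [Perm.mul_apply, hfix i hi, swap_apply_of_ne_of_ne]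
      · exact fun h => hQ.1 (h ▸ hi)
      · exact fun h => hQ.2 (h ▸ hi)
    · rw [mul_smul, hg]
      refine Subtype.ext ?_
      change swap a b • Q.1 = Q.1
      rw [hQ_eq, Finset.smul_finset_insert, Finset.smul_finset_singleton, Perm.smul_def,
        Perm.smul_def, swap_apply_left, swap_apply_right, Finset.pair_comm]

lemma Xk.card_filter_disjoint (B : Finset (Fin k)) :
    (Finset.univ.filter fun P : Xk k => Disjoint P.1 B).card = (k - B.card).choose 2 := by
  have hcompl : Bᶜ.card = k - B.card := by rw [Finset.card_compl, Fintype.card_fin]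
  rw [← hcompl, ← Finset.card_powersetCard]
  refine Finset.card_bij (fun P _ => P.1) ?_ (fun _ _ _ _ => Subtype.ext) ?_
  · intro P hP
    exact Finset.mem_powersetCard.mpr
      ⟨Finset.subset_compl_iff_disjoint_right.mpr (Finset.mem_filter.mp hP).2, P.2⟩
  · intro P hP
    obtain ⟨hPB, hcard⟩ := Finset.mem_powersetCard.mp hP
    exact ⟨⟨P, hcard⟩, Finset.mem_filter.mpr
      ⟨Finset.mem_univ _, Finset.subset_compl_iff_disjoint_right.mp hPB⟩, rfl⟩

lemma Xk.doubleTransposition_smul_eq_self_iff {p q r s : Fin k} (hnd : [p, q, r, s].Nodup)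
    (P : Xk k) :
    (swap p q * swap r s) • P = P ∧ (swap p r * swap q s) • P = P ↔
      Disjoint P.1 {p, q, r, s} := by
  simp only [List.nodup_cons, List.mem_cons, List.not_mem_nil, or_false, not_or] at hnd
  obtain ⟨⟨hpq, hpr, hps⟩, ⟨hqr, hqs⟩, hrs, -⟩ := hnd
  constructor
  · rintro ⟨ht, hg⟩
    have hp_q := Xk.apply_mem_iff_of_smul_eq_self ht p
    have hp_r := Xk.apply_mem_iff_of_smul_eq_self hg p
    have hq_s := Xk.apply_mem_iff_of_smul_eq_self hg q
    rw [Perm.mul_apply, swap_apply_of_ne_of_ne hpr hps, swap_apply_left] at hp_q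
    rw [Perm.mul_apply, swap_apply_of_ne_of_ne hpq hps, swap_apply_left] at hp_r
    rw [Perm.mul_apply, swap_apply_left, swap_apply_of_ne_of_ne (Ne.symm hps) (Ne.symm hrs)] at hq_s
    have hp : p ∉ P.1 := by
      intro hp
      have hsub : ({p, q, r, s} : Finset (Fin k)) ⊆ P.1 := by
        simp only [Finset.insert_subset_iff, Finset.singleton_subset_iff]
        tauto
      have hcard : ({p, q, r, s} : Finset (Fin k)).card = 4 := by
        simp [*]
      exact absurd (Finset.card_le_card hsub) (by rw [P.2, hcard]; decide)
    simp only [Finset.disjoint_insert_right, Finset.disjoint_singleton_right]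
    tauto
  · intro hdisj
    have hne {i : Fin k} (hi : i ∈ P.1) : i ≠ p ∧ i ≠ q ∧ i ≠ r ∧ i ≠ s := by
      simpa using Finset.disjoint_left.mp hdisj hi
    constructor <;> refine Xk.smul_eq_self_of_fixed fun i hi => ?_ <;>
      obtain ⟨hp, hq, hr, hs⟩ := hne hi
    · rw [Perm.mul_apply, swap_apply_of_ne_of_ne hr hs, swap_apply_of_ne_of_ne hp hq]
    · rw [Perm.mul_apply, swap_apply_of_ne_of_ne hq hs, swap_apply_of_ne_of_ne hp hr]

lemma swap_mul_swap_mul_self {α : Type*} [DecidableEq α] {p q r s : α}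
    (hnd : [p, q, r, s].Nodup) : swap p q * swap r s * (swap p q * swap r s) = 1 := by
  rw [(Perm.disjoint_swap_swap hnd).commute.symm.mul_mul_mul_comm, swap_mul_self, swap_mul_self,
    one_mul]

lemma commute_swap_mul_swap {α : Type*} [DecidableEq α] {p q r s : α}
    (hnd : [p, q, r, s].Nodup) :
    Commute (swap p r * swap q s) (swap p q * swap r s) := by
  have hcomm := (Perm.disjoint_swap_swap hnd).commute
  simp only [List.nodup_cons, List.mem_cons, List.not_mem_nil, or_false, not_or] at hnd
  obtain ⟨⟨hpq, -, hps⟩, ⟨hqr, -⟩, hrs, -⟩ := hnd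
  set g := swap p r * swap q s
  have hgp : g p = r := by
    rw [Perm.mul_apply, swap_apply_of_ne_of_ne hpq hps, swap_apply_left]
  have hgq : g q = s := by
    rw [Perm.mul_apply, swap_apply_left, swap_apply_of_ne_of_ne (Ne.symm hps) (Ne.symm hrs)]
  have hgr : g r = p := by
    rw [Perm.mul_apply, swap_apply_of_ne_of_ne (Ne.symm hqr) hrs, swap_apply_right]
  have hgs : g s = q := by
    rw [Perm.mul_apply, swap_apply_right, swap_apply_of_ne_of_ne (Ne.symm hpq) hqr]
  calc g * (swap p q * swap r s)
      = swap r s * (g * swap r s) := by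
        rw [← mul_assoc, mul_swap_eq_swap_mul g p q, hgp, hgq, mul_assoc]
    _ = swap r s * swap p q * g := by
        rw [mul_swap_eq_swap_mul, hgr, hgs, ← mul_assoc]
    _ = swap p q * swap r s * g := by
        rw [hcomm.eq]

lemma commute_swap_of_apply_eq_self {α : Type*} [DecidableEq α] {g : Perm α} {x y : α}
    (hx : g x = x) (hy : g y = y) : Commute g (swap x y) := by
  rw [commute_iff_eq, mul_swap_eq_swap_mul, hx, hy]

lemma swap_mul_swap_mem_alternatingGroup {α : Type*} [DecidableEq α] [Fintype α] {p q r s : α}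
    (hpq : p ≠ q) (hrs : r ≠ s) : swap p q * swap r s ∈ alternatingGroup α := by
  rw [Perm.mem_alternatingGroup, map_mul, Perm.sign_swap hpq, Perm.sign_swap hrs, neg_mul_neg,
    one_mul]

lemma four_le_of_odd_choose_two {n : ℕ} (hn : Odd ((n - 4).choose 2)) : 4 ≤ n := by
  by_contra! h
  simp [Nat.sub_eq_zero_of_le h.le] at hn

lemma apply_eq_apply_of_centralizer_invariant {β : Type*} {p q r s : Fin k}
    (hnd : [p, q, r, s].Nodup) {m : Xk k → β}
    (hm : ∀ g ∈ alternatingGroup (Fin k), Commute g (swap p q * swap r s) →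
      ∀ P, (swap p q * swap r s) • P = P → m (g • P) = m P)
    {P Q : Xk k} (hP : Disjoint P.1 {p, q, r, s}) (hQ : Disjoint Q.1 {p, q, r, s}) :
    m Q = m P := by
  obtain ⟨h, h_even, hfix, rfl⟩ := Xk.exists_even_smul_eq hP hQ
  simp only [Finset.mem_insert, Finset.mem_singleton, forall_eq_or_imp, forall_eq] at hfix
  obtain ⟨hp, hq, hr, hs⟩ := hfix
  exact hm h h_even ((commute_swap_of_apply_eq_self hp hq).mul_right
    (commute_swap_of_apply_eq_self hr hs)) P
    ((Xk.doubleTransposition_smul_eq_self_iff hnd P).mpr hP).1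

theorem eq_zero_of_doubleTransposition_invariant {p q r s : Fin k} (hnd : [p, q, r, s].Nodup)
    (hodd : Odd ((k - 4).choose 2)) {m : Xk k → ZMod 2} (hsum : ∑ P, m P = 0)
    (ht : ∀ P, m ((swap p q * swap r s) • P) = m P)
    (hm : ∀ g ∈ alternatingGroup (Fin k), Commute g (swap p q * swap r s) →
      ∀ P, (swap p q * swap r s) • P = P → m (g • P) = m P)
    {P : Xk k} (hP : Disjoint P.1 {p, q, r, s}) : m P = 0 := by
  have hcard : ({p, q, r, s} : Finset (Fin k)).card = 4 := by
    simpa using List.toFinset_card_of_nodup hnd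
  have hnd' : [p, r, q, s].Nodup :=
    ((List.Perm.swap r q [s]).cons p).nodup hnd
  obtain ⟨hpr, hqs⟩ : p ≠ r ∧ q ≠ s := by simp_all
  set t := swap p q * swap r s with ht_def
  set g := swap p r * swap q s with hg_def
  have htt : t * t = 1 := swap_mul_swap_mul_self hnd
  have hgg : g * g = 1 := swap_mul_swap_mul_self hnd'
  have hgt : Commute g t := commute_swap_mul_swap hnd
  have hconst (Q : Xk k) (hQ : Disjoint Q.1 {p, q, r, s}) : m Q = m P :=
    apply_eq_apply_of_centralizer_invariant hnd hm hP hQ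
  calc m P = (k - 4).choose 2 • m P := by
        rw [nsmul_eq_mul, ZMod.natCast_eq_one_iff_odd.mpr hodd, one_mul]
    _ = ∑ Q with Disjoint Q.1 {p, q, r, s}, m Q := by
        rw [Finset.sum_congr rfl fun Q hQ => hconst Q (Finset.mem_filter.mp hQ).2,
          Finset.sum_const, Xk.card_filter_disjoint, hcard]
    _ = ∑ Q with t • Q = Q ∧ g • Q = Q, m Q := by
        simp_rw [ht_def, hg_def, Xk.doubleTransposition_smul_eq_self_iff hnd]
    _ = ∑ Q with t • Q = Q, m Q := by
        rw [← Finset.filter_filter]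
        refine (sum_eq_sum_filter_fixed (σ := fun Q => g • Q) ?_ ?_ ?_).symm
        · intro Q hQ
          rw [Finset.mem_filter_univ] at hQ ⊢
          rw [← mul_smul, ← hgt.eq, mul_smul, hQ]
        · intro Q _
          rw [← mul_smul, hgg, one_smul]
        · intro Q hQ
          exact hm g (swap_mul_swap_mem_alternatingGroup hpr hqs) hgt Q (by simpa using hQ)
    _ = ∑ Q, m Q := by
        refine (sum_eq_sum_filter_fixed (σ := fun Q => t • Q) ?_ ?_ ?_).symm
        · exact fun Q _ => Finset.mem_univ _
        · intro Q _
          rw [← mul_smul, htt, one_smul]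
        · exact fun Q _ => ht Q
    _ = 0 := hsum

end Pairs

section KernelCoordinates

open Equiv

lemma exists_apply_smul_eq {k : ℕ} {H : Type*} [Group H] {ρ : H →* Perm (Fin k)}
    (hρ : alternatingGroup (Fin k) ≤ ρ.range) (P Q : Xk k) :
    ∃ h, ρ h • P = Q := by
  obtain ⟨g, hg, -, hgP⟩ :=
    Xk.exists_even_smul_eq (Finset.disjoint_empty_right P.1) (Finset.disjoint_empty_right Q.1)
  obtain ⟨h, rfl⟩ := hρ hg
  exact ⟨h, hgP⟩

/-- Coordinates on the kernel of `ρ`, indexed by 2-subsets and with values in `𝔽₂` (written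
multiplicatively). They identify `ρ.ker`, on which `H` acts by conjugation, with a submodule of the
sum-zero vectors of the permutation module on 2-subsets. -/
structure KernelCoordinates {k : ℕ} {H : Type*} [Group H] (ρ : H →* Perm (Fin k)) where
  coord : Xk k → ρ.ker →* Multiplicative (ZMod 2)
  eq_one_of_coord_eq_one : ∀ n, (∀ P, coord P n = 1) → n = 1
  sum_toAdd_coord : ∀ n, ∑ P, (coord P n).toAdd = 0
  coord_smul_conjNormal : ∀ h P n, coord (ρ h • P) (MulAut.conjNormal h n) = coord P n

namespace KernelCoordinates

variable {k : ℕ} {H : Type*} [Group H] {ρ : H →* Perm (Fin k)} (C : KernelCoordinates ρ)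

lemma coord_conjNormal_inv (h : H) (P : Xk k) (n : ρ.ker) :
    C.coord P (MulAut.conjNormal h⁻¹ n) = C.coord (ρ h • P) n := by
  rw [← C.coord_smul_conjNormal h, ← MulAut.mul_apply, ← map_mul, mul_inv_cancel, map_one,
    MulAut.one_apply]

lemma coord_mul_self (P : Xk k) (n : ρ.ker) : C.coord P n * C.coord P n = 1 :=
  Multiplicative.toAdd.injective (CharTwo.add_self_eq_zero (C.coord P n).toAdd)

lemma sq_eq_one_of_mem_ker (C : KernelCoordinates ρ) {x : H} (hx : x ∈ ρ.ker) : x ^ 2 = 1 := by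
  refine congrArg Subtype.val (C.eq_one_of_coord_eq_one (⟨x, hx⟩ ^ 2) fun P => ?_)
  rw [pow_two, map_mul, coord_mul_self]

/-- The elements of the kernel of `ρ` whose coordinate at `P` vanishes, as a subgroup of `H`. -/
def hyperplane (P : Xk k) : Subgroup H :=
  (C.coord P).ker.map ρ.ker.subtype

variable {C} in
lemma mem_hyperplane {P : Xk k} {x : H} :
    x ∈ C.hyperplane P ↔ ∃ hx : x ∈ ρ.ker, C.coord P ⟨x, hx⟩ = 1 := by
  simp [hyperplane]

lemma hyperplane_le_ker (P : Xk k) : C.hyperplane P ≤ ρ.ker :=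
  Subgroup.map_subtype_le _

lemma mem_normalizer_hyperplane {P : Xk k} {h : H} (hP : ρ h • P = P) :
    h ∈ Subgroup.normalizer (C.hyperplane P : Set H) := by
  refine Subgroup.mem_normalizer_iff.mpr fun x => ?_
  simp only [mem_hyperplane]
  have hcoord (hx : x ∈ ρ.ker) :
      C.coord P ⟨h * x * h⁻¹, ρ.normal_ker.conj_mem x hx h⟩ = C.coord P ⟨x, hx⟩ :=
    (congrArg (C.coord · _) hP).symm.trans (C.coord_smul_conjNormal h P ⟨x, hx⟩)
  refine ⟨fun ⟨hx, hPx⟩ => ⟨_, (hcoord hx).trans hPx⟩, fun ⟨hx, hPx⟩ => ?_⟩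
  have hx' : x ∈ ρ.ker := by simpa [MonoidHom.mem_ker] using hx
  exact ⟨hx', (hcoord hx').symm.trans hPx⟩

lemma relIndex_hyperplane (hρ : alternatingGroup (Fin k) ≤ ρ.range) (hker : ρ.ker ≠ ⊥) (P : Xk k) :
    (C.hyperplane P).relIndex ρ.ker = 2 := by
  obtain ⟨n, hn⟩ : ∃ n, C.coord P n ≠ 1 := by
    by_contra! hP
    refine hker ((Subgroup.eq_bot_iff_forall _).mpr fun x hx => congrArg Subtype.val
      (C.eq_one_of_coord_eq_one ⟨x, hx⟩ fun Q => ?_))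
    obtain ⟨h, rfl⟩ := exists_apply_smul_eq hρ P Q
    rw [← C.coord_conjNormal_inv, hP]
  have : Fact (Nat.card (Multiplicative (ZMod 2))).Prime := ⟨by simp [Nat.prime_two]⟩
  have hrange : (C.coord P).range = ⊤ := by
    refine ((C.coord P).range.eq_bot_or_eq_top_of_prime_card).resolve_left fun hbot => hn ?_
    exact Subgroup.mem_bot.mp (hbot ▸ ⟨n, rfl⟩)
  rw [Subgroup.relIndex, hyperplane, Subgroup.subgroupOf,
    Subgroup.comap_map_eq_self_of_injective ρ.ker.subtype_injective, Subgroup.index_ker, hrange,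
    Subgroup.card_top]
  simp

lemma sq_mem_hyperplane (hρ : alternatingGroup (Fin k) ≤ ρ.range) (hodd : Odd ((k - 4).choose 2))
    {p q r s : Fin k} (hnd : [p, q, r, s].Nodup) {h : H} (hh : ρ h = swap p q * swap r s)
    {P : Xk k} (hP : Disjoint P.1 {p, q, r, s}) :
    h ^ 2 ∈ C.hyperplane P := by
  have hsq : h ^ 2 ∈ ρ.ker := by
    rw [MonoidHom.mem_ker, map_pow, hh, pow_two, swap_mul_swap_mul_self hnd]
  refine mem_hyperplane.mpr ⟨hsq, Multiplicative.toAdd.injective ?_⟩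
  refine eq_zero_of_doubleTransposition_invariant hnd hodd
    (m := fun Q => (C.coord Q ⟨h ^ 2, hsq⟩).toAdd) (C.sum_toAdd_coord _) (fun Q => ?_)
    (fun g hg hgt Q hQ => congrArg Multiplicative.toAdd ?_) hP
  · have hconj : MulAut.conjNormal h (⟨h ^ 2, hsq⟩ : ρ.ker) = ⟨h ^ 2, hsq⟩ :=
      Subtype.ext (by simp only [MulAut.conjNormal_apply]; group)
    rw [← hh, ← C.coord_smul_conjNormal h Q, hconj]
  · obtain ⟨x, rfl⟩ := hρ hg
    have hν : h⁻¹ * (x⁻¹ * h * x) ∈ ρ.ker := by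
      rw [MonoidHom.mem_ker, map_mul, map_mul, map_mul, map_inv, map_inv, hh, mul_assoc _ _ (ρ x),
        ← hgt.eq, inv_mul_cancel_left, inv_mul_cancel]
    -- `x⁻¹ * h * x` lifts `ρ h`, so it is `h * ν`, and `(h * ν) ^ 2 = h ^ 2 * (h⁻¹ * ν * h) * ν`.
    have hconj : MulAut.conjNormal x⁻¹ (⟨h ^ 2, hsq⟩ : ρ.ker) =
        ⟨h ^ 2, hsq⟩ * MulAut.conjNormal h⁻¹ ⟨_, hν⟩ * ⟨_, hν⟩ :=
      Subtype.ext (by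
        simp only [Subgroup.coe_mul, MulAut.conjNormal_apply, pow_two]
        group)
    rw [← coord_conjNormal_inv, hconj, map_mul, map_mul, coord_conjNormal_inv, hh, hQ, mul_assoc,
      coord_mul_self, mul_one]

lemma exists_map_eq_and_pow_three_eq_one (C : KernelCoordinates ρ)
    (hρ : alternatingGroup (Fin k) ≤ ρ.range) {g : Perm (Fin k)} (hg : g.IsThreeCycle) :
    ∃ y, ρ y = g ∧ y ^ 3 = 1 := by
  obtain ⟨h, rfl⟩ := hρ hg.mem_alternatingGroup
  have hρ3 : ρ h ^ 3 = 1 := hg.orderOf ▸ pow_orderOf_eq_one _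
  have hker : h ^ 3 ∈ ρ.ker := by rw [MonoidHom.mem_ker, map_pow, hρ3]
  refine ⟨h ^ 4, by rw [map_pow, pow_succ, hρ3, one_mul], ?_⟩
  rw [← pow_mul, mul_comm, pow_mul, pow_mul _ 2 2, C.sq_eq_one_of_mem_ker hker, one_pow]

lemma exists_mem_normalizer_hyperplane_and_pow_three_eq_one
    (hρ : alternatingGroup (Fin k) ≤ ρ.range) {P : Xk k} {g : Perm (Fin k)}
    (hg : g.IsThreeCycle) (hP : ∀ i ∈ P.1, g i = i) :
    ∃ y : Subgroup.normalizer (C.hyperplane P : Set H), ρ y = g ∧ y ^ 3 = 1 := by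
  obtain ⟨y, rfl, hy3⟩ := C.exists_map_eq_and_pow_three_eq_one hρ hg
  exact ⟨⟨y, C.mem_normalizer_hyperplane (Xk.smul_eq_self_of_fixed hP)⟩, rfl, Subtype.ext hy3⟩

lemma sq_mul_mem_hyperplane (hρ : alternatingGroup (Fin k) ≤ ρ.range)
    (hodd : Odd ((k - 4).choose 2)) {c d i j : Fin k} (hnd : [c, i, d, j].Nodup) {x y : H}
    (hx : ρ x = swap d c * swap d i) (hy : ρ y = swap d c * swap d j) {P : Xk k}
    (hP : Disjoint P.1 {c, i, d, j}) : (x * y) ^ 2 ∈ C.hyperplane P := by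
  obtain ⟨hic, hid⟩ : i ≠ c ∧ i ≠ d := by
    simp only [List.nodup_cons, List.mem_cons, not_or] at hnd
    exact ⟨Ne.symm hnd.1.1, hnd.2.1.1⟩
  refine C.sq_mem_hyperplane hρ hodd hnd ?_ hP
  rw [map_mul, hx, hy, ← mul_assoc, swap_comm d i, swap_mul_swap_mul_swap hid hic]

theorem exists_inf_ker_eq_hyperplane (C : KernelCoordinates ρ)
    (hρ : alternatingGroup (Fin k) ≤ ρ.range) (hodd : Odd ((k - 4).choose 2)) (P : Xk k) :
    ∃ H₀ : Subgroup H, H₀ ⊓ ρ.ker = C.hyperplane P ∧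
      H₀.map ρ = (alternatingGroup ↥(P.1ᶜ)).map Perm.ofSubtype := by
  have hk : 4 ≤ k := four_le_of_odd_choose_two hodd
  obtain ⟨c, hc, d, hd, hcd⟩ : ∃ c ∈ P.1ᶜ, ∃ d ∈ P.1ᶜ, c ≠ d := by
    rw [← Finset.one_lt_card, Finset.card_compl, Fintype.card_fin, P.2]
    omega
  have hlift : ∀ i ∈ P.1ᶜ \ {c, d}, ∃ y : Subgroup.normalizer (C.hyperplane P : Set H),
      ρ y = swap d c * swap d i ∧ y ^ 3 = 1 := by
    intro i hi
    obtain ⟨hiP, hic, hid⟩ : i ∉ P.1 ∧ i ≠ c ∧ i ≠ d := by simpa using hi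
    refine C.exists_mem_normalizer_hyperplane_and_pow_three_eq_one hρ
      (Perm.isThreeCycle_swap_mul_swap_same hcd.symm hid.symm hic.symm) fun j hj => ?_
    have hne {l : Fin k} (hl : l ∉ P.1) : j ≠ l := ne_of_mem_of_not_mem hj hl
    rw [Finset.mem_compl] at hc hd
    rw [Perm.mul_apply, swap_apply_of_ne_of_ne (hne hd) (hne hiP),
      swap_apply_of_ne_of_ne (hne hd) (hne hc)]
  choose! y hy hy3 using hlift
  have hsq : ∀ i ∈ P.1ᶜ \ {c, d}, ∀ j ∈ P.1ᶜ \ {c, d}, i ≠ j →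
      (y i * y j : H) ^ 2 ∈ C.hyperplane P := by
    intro i hi j hj hij
    obtain ⟨hiP, hic, hid⟩ : i ∉ P.1 ∧ i ≠ c ∧ i ≠ d := by simpa using hi
    obtain ⟨hjP, hjc, hjd⟩ : j ∉ P.1 ∧ j ≠ c ∧ j ≠ d := by simpa using hj
    refine C.sq_mul_mem_hyperplane hρ hodd ?_ (hy i hi) (hy j hj) ?_
    · simp [hic.symm, hcd, hjc.symm, hid, hij, hjd.symm]
    · simp [Finset.mem_compl.mp hc, Finset.mem_compl.mp hd, hiP, hjP]
  obtain ⟨D, hD, hDρ⟩ := exists_inf_ker_eq_and_map_eq_map_alternatingGroup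
    (ρ.comp (Subgroup.subtype _))
    ((C.hyperplane P).subgroupOf (Subgroup.normalizer (C.hyperplane P : Set H)))
    (fun x hx => C.hyperplane_le_ker P hx) hc hd hcd y hy
    (fun i hi => hy3 i hi ▸ one_mem _) hsq
  refine ⟨D.map (Subgroup.subtype _), le_antisymm ?_ fun x hx => ?_,
    by rw [Subgroup.map_map, hDρ]⟩
  · rintro - ⟨⟨x, hxD, rfl⟩, hx⟩
    exact hD.le ⟨hxD, hx⟩
  · obtain ⟨hxD, hxρ⟩ := hD.ge (Subgroup.mem_subgroupOf.mpr hx :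
      (⟨x, Subgroup.le_normalizer hx⟩ : Subgroup.normalizer (C.hyperplane P : Set H)) ∈ _)
    exact ⟨⟨_, hxD, rfl⟩, hxρ⟩

end KernelCoordinates

end KernelCoordinates

section Index

variable {H L : Type*} [Group H] [Group L]

lemma relIndex_sup_eq_relIndex (K N : Subgroup H) [N.Normal] :
    K.relIndex (N ⊔ K) = K.relIndex N := by
  refine (Nat.card_congr (Equiv.ofBijective
    (Subgroup.quotientSubgroupOfEmbeddingOfLE K (le_sup_left : N ≤ N ⊔ K))
    ⟨Function.Embedding.injective _, ?_⟩)).symm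
  rintro ⟨x, hx⟩
  obtain ⟨n, hn, y, hy, rfl⟩ := Subgroup.mem_sup_of_normal_left.mp hx
  refine ⟨QuotientGroup.mk ⟨n, hn⟩, QuotientGroup.eq.mpr ?_⟩
  simpa [Subgroup.mem_subgroupOf] using hy

lemma index_eq_relIndex_ker_mul_relIndex_map (ρ : H →* L) (K : Subgroup H) :
    K.index = K.relIndex ρ.ker * (K.map ρ).relIndex ρ.range := by
  rw [← relIndex_sup_eq_relIndex, ← Subgroup.index_comap, Subgroup.comap_map_eq, sup_comm,
    Subgroup.relIndex_mul_index le_sup_left]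

open Equiv in
lemma factorial_mul_relIndex_map_alternatingGroup {α : Type*} [Fintype α] [DecidableEq α]
    {U : Finset α} (hU : 1 < U.card) :
    U.card.factorial * ((alternatingGroup U).map (Perm.ofSubtype (p := (· ∈ U)))).relIndex
      (alternatingGroup α) = (Fintype.card α).factorial := by
  have : Nontrivial α := by
    obtain ⟨a, -, b, -, hab⟩ := Finset.one_lt_card.mp hU
    exact ⟨a, b, hab⟩
  rw [← two_mul_card_map_alternatingGroup hU, mul_assoc, ← Subgroup.relIndex_bot_left,
    Subgroup.relIndex_mul_relIndex _ _ _ bot_le]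
  · rw [Subgroup.relIndex_bot_left, two_mul_nat_card_alternatingGroup, Nat.card_perm,
      Nat.card_eq_fintype_card]
  · rw [alternatingGroup.map_ofSubtype]
    exact inf_le_right

end Index

section Corefree

open Equiv

lemma Xk.relIndex_map_alternatingGroup_compl {k : ℕ} (hk : 4 ≤ k) (P : Xk k) :
    ((alternatingGroup ↥(P.1ᶜ)).map (Perm.ofSubtype (p := (· ∈ P.1ᶜ)))).relIndex
      (alternatingGroup (Fin k)) = k * (k - 1) := by
  have hcard : P.1ᶜ.card = k - 2 := by rw [Finset.card_compl, Fintype.card_fin, P.2]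
  have hfac : k.factorial = (k - 2).factorial * (k * (k - 1)) := by
    obtain ⟨n, rfl⟩ := Nat.exists_eq_add_of_le' (show 2 ≤ k by omega)
    simp only [Nat.factorial_succ, Nat.add_sub_cancel, Nat.add_succ_sub_one]
    ring
  refine Nat.eq_of_mul_eq_mul_left (k - 2).factorial_pos ?_
  rw [← hfac, ← hcard, factorial_mul_relIndex_map_alternatingGroup (by omega), Fintype.card_fin]

namespace KernelCoordinates

variable {k : ℕ} {H : Type*} [Group H] {ρ : H →* Perm (Fin k)} (C : KernelCoordinates ρ)

lemma normalCore_eq_bot (hρ : alternatingGroup (Fin k) ≤ ρ.range) {K : Subgroup H} {P : Xk k}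
    (hfix : ∀ x ∈ K, ∀ i ∈ P.1, ρ x i = i) (hker : K ⊓ ρ.ker ≤ C.hyperplane P) :
    K.normalCore = ⊥ := by
  refine (Subgroup.eq_bot_iff_forall _).mpr fun x hx => ?_
  have hxρ : x ∈ ρ.ker := by
    refine MonoidHom.mem_ker.mpr (Perm.ext fun i => ?_)
    obtain ⟨j, -, hji⟩ := Finset.exists_mem_ne (one_lt_two.trans_eq P.2.symm) i
    obtain ⟨h, hh⟩ := exists_apply_smul_eq hρ P ⟨{i, j}, Finset.card_pair hji.symm⟩
    have hi : (ρ h)⁻¹ i ∈ P.1 := by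
      rw [← Perm.smul_def, Finset.inv_smul_mem_iff]
      exact (congrArg Subtype.val hh).ge (Finset.mem_insert_self i {j})
    have hfixi := hfix _ (by simpa using hx h⁻¹) _ hi
    simpa using hfixi
  refine congrArg Subtype.val (C.eq_one_of_coord_eq_one ⟨x, hxρ⟩ fun Q => ?_)
  obtain ⟨h, rfl⟩ := exists_apply_smul_eq hρ P Q
  obtain ⟨_, hcoord⟩ := mem_hyperplane.mp
    (hker ⟨hx h⁻¹, (MulAut.conjNormal h⁻¹ (⟨x, hxρ⟩ : ρ.ker)).2⟩)
  rw [← coord_conjNormal_inv]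
  exact hcoord

theorem exists_index_eq_and_normalCore_eq_bot (C : KernelCoordinates ρ)
    (hρ : ρ.range = alternatingGroup (Fin k)) (hker : ρ.ker ≠ ⊥)
    (hodd : Odd ((k - 4).choose 2)) :
    ∃ H₀ : Subgroup H, H₀.index = 2 * (k * (k - 1)) ∧ H₀.normalCore = ⊥ := by
  have hk : 4 ≤ k := four_le_of_odd_choose_two hodd
  obtain ⟨U, -, hU⟩ := Finset.exists_subset_card_eq (s := (Finset.univ : Finset (Fin k))) (n := 2)
    (by simp; omega)
  let P : Xk k := ⟨U, hU⟩
  obtain ⟨H₀, hH₀, hmap⟩ := C.exists_inf_ker_eq_hyperplane hρ.ge hodd P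
  refine ⟨H₀, ?_, C.normalCore_eq_bot hρ.ge (P := P) (fun x hx i hi => ?_) hH₀.le⟩
  · rw [index_eq_relIndex_ker_mul_relIndex_map ρ, hmap, hρ, ← Subgroup.inf_relIndex_right, hH₀,
      C.relIndex_hyperplane hρ.ge hker, P.relIndex_map_alternatingGroup_compl hk]
  · obtain ⟨g, -, hg⟩ : ρ x ∈ (alternatingGroup ↥(P.1ᶜ)).map Perm.ofSubtype :=
      hmap ▸ Subgroup.mem_map_of_mem ρ hx
    rw [← hg, Perm.ofSubtype_apply_of_not_mem]
    simpa using hi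

end KernelCoordinates

end Corefree

section SpechtModule

lemma formMap_apply {X R : Type*} [Fintype X] [DecidableEq X] [CommRing R] (v w : X → R) :
    formMap R v w = ∑ q, v q * w q := by
  simp [formMap]

lemma mem_perpSub_iff_le_ker {X R : Type*} [Fintype X] [DecidableEq X] [CommRing R]
    {U : Submodule R (X → R)} {v : X → R} :
    v ∈ perpSub R U ↔ U ≤ LinearMap.ker (formMap R v) := by
  simp [perpSub, SetLike.le_def, formMap_apply, mul_comm]

lemma mem_perpSub_P1_sup_P2_iff {k : ℕ} {v : Xk k → ZMod 2} :
    v ∈ perpSub (ZMod 2) (P1 k ⊔ P2 k) ↔ ∑ P, v P = 0 ∧ ∀ i, ∑ P, xVec k i P * v P = 0 := by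
  simp [mem_perpSub_iff_le_ker, P1, P2, Submodule.span_le, Set.range_subset_iff, formMap_apply,
    allOnes, mul_comm]

lemma Xk.card (k : ℕ) : Fintype.card (Xk k) = k.choose 2 := by
  simpa using Xk.card_filter_disjoint (∅ : Finset (Fin k))

lemma add_one_lt_choose_two {n : ℕ} (hn : 4 ≤ n) : n + 1 < n.choose 2 := by
  induction n, hn using Nat.le_induction with
  | base => decide
  | succ n hn ih =>
    rw [Nat.choose_succ_succ' n 1, Nat.choose_one_right, one_add_one_eq_two]
    omega

lemma perpSub_P1_sup_P2_ne_bot {k : ℕ} (hk : 4 ≤ k) : perpSub (ZMod 2) (P1 k ⊔ P2 k) ≠ ⊥ := by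
  let f : (Xk k → ZMod 2) →ₗ[ZMod 2] ZMod 2 × (Fin k → ZMod 2) :=
    (formMap (ZMod 2) (allOnes k)).prod (LinearMap.pi fun i => formMap (ZMod 2) (xVec k i))
  have hf : LinearMap.ker f ≠ ⊥ := LinearMap.ker_ne_bot_of_finrank_lt <| by
    simpa [Xk.card, add_comm] using add_one_lt_choose_two hk
  refine ne_bot_of_le_ne_bot hf fun v hv => ?_
  obtain ⟨hsum, hx⟩ := Prod.ext_iff.mp (LinearMap.mem_ker.mp hv)
  refine mem_perpSub_P1_sup_P2_iff.mpr ⟨?_, fun i => ?_⟩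
  · simpa [f, formMap_apply, allOnes] using hsum
  · simpa [f, formMap_apply] using congrFun hx i

lemma odd_choose_two {n : ℕ} (hn : n % 4 = 2 ∨ n % 4 = 3) : Odd (n.choose 2) := by
  have hdiv : n = 4 * (n / 4) + n % 4 := (Nat.div_add_mod n 4).symm
  generalize n / 4 = m at hdiv
  have hprod : ∃ b, n * (n - 1) = 2 * ((2 * m + 1) * (2 * b + 1)) := by
    rcases hn with hn | hn <;> rw [hn] at hdiv <;> subst hdiv
    · exact ⟨2 * m, by rw [Nat.add_sub_assoc (by decide)]; ring⟩
    · exact ⟨2 * m + 1, by rw [Nat.add_sub_assoc (by decide)]; ring⟩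
  obtain ⟨b, hb⟩ := hprod
  rw [Nat.choose_two_right, hb, Nat.mul_div_cancel_left _ two_pos]
  exact (odd_two_mul_add_one m).mul (odd_two_mul_add_one b)

end SpechtModule

section SpechtExtension

variable {k : ℕ} {H : Type*} [Group H] {N : Subgroup H} [hN : N.Normal]
  (iso : H ⧸ N ≃* alternatingGroup (Fin k))

/-- The action on points of an extension of `A_k` by `N`. -/
def pointAction : H →* Equiv.Perm (Fin k) :=
  (alternatingGroup (Fin k)).subtype.comp (iso.toMonoidHom.comp (QuotientGroup.mk' N))

lemma range_pointAction : (pointAction iso).range = alternatingGroup (Fin k) := by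
  rw [pointAction, MonoidHom.range_comp,
    MonoidHom.range_eq_top.mpr (iso.surjective.comp (QuotientGroup.mk'_surjective N)),
    ← MonoidHom.range_eq_map, Subgroup.range_subtype]

lemma ker_pointAction : (pointAction iso).ker = N := by
  ext x
  simp [pointAction, MonoidHom.mem_ker]

/-- The coordinates of `M ⊆ 𝔽₂^(Xk k)`, read off on the kernel through the identification `e`. -/
noncomputable def spechtCoordinates (e : N ≃* Multiplicative (perpSub (ZMod 2) (P1 k ⊔ P2 k)))
    (hequiv : ∀ (h : H) (n : N),
      Multiplicative.toAdd (e ⟨h * (n : H) * h⁻¹, hN.conj_mem _ n.2 h⟩)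
        = P3Rep k (iso (QuotientGroup.mk' N h)) (Multiplicative.toAdd (e n))) :
    KernelCoordinates (pointAction iso) where
  coord P :=
    (AddMonoidHom.toMultiplicative ((Pi.evalAddMonoidHom _ P).comp
      (Submodule.subtype _).toAddMonoidHom)).comp
      (e.toMonoidHom.comp (MulEquiv.subgroupCongr (ker_pointAction iso)).toMonoidHom)
  eq_one_of_coord_eq_one n hn := by
    have he : e (MulEquiv.subgroupCongr (ker_pointAction iso) n) = 1 :=
      Multiplicative.toAdd.injective
        (Subtype.ext (funext fun P => congrArg Multiplicative.toAdd (hn P)))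
    simpa using he
  sum_toAdd_coord n := (mem_perpSub_P1_sup_P2_iff.mp (e _).toAdd.2).1
  coord_smul_conjNormal h P n := by
    let v := (e (MulEquiv.subgroupCongr (ker_pointAction iso) n)).toAdd
    have hv : (P3Rep k (iso (QuotientGroup.mk' N h)) v).1 (pointAction iso h • P) = v.1 P :=
      congrArg v.1 (inv_smul_smul (pointAction iso h) P)
    rw [← hequiv] at hv
    exact congrArg Multiplicative.ofAdd hv

end SpechtExtension

theorem nonsplit_extension_by_S_k22_has_perm_rep_general
    (k : ℕ) (hk : 6 ≤ k) (hmod : k % 4 = 2 ∨ k % 4 = 3)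
    (H : Type*) [Group H]
    (N : Subgroup H) [hN : N.Normal]
    (iso : H ⧸ N ≃* alternatingGroup (Fin k))
    (e : N ≃* Multiplicative (perpSub (ZMod 2) (P1 k ⊔ P2 k)))
    (hequiv : ∀ (h : H) (n : N),
      Multiplicative.toAdd (e ⟨h * (n : H) * h⁻¹, hN.conj_mem _ n.2 h⟩)
        = P3Rep k (iso (QuotientGroup.mk' N h)) (Multiplicative.toAdd (e n))) :
    ∃ H₀ : Subgroup H, H₀.index = 2 * (k * (k - 1)) ∧ H₀.normalCore = ⊥ := by
  have hN_ne_bot : N ≠ ⊥ := by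
    rintro rfl
    have : Subsingleton (perpSub (ZMod 2) (P1 k ⊔ P2 k)) := e.symm.injective.subsingleton
    exact perpSub_P1_sup_P2_ne_bot (by omega) ((Submodule.subsingleton_iff_eq_bot).mp this)
  exact (spechtCoordinates iso e hequiv).exists_index_eq_and_normalCore_eq_bot
    (range_pointAction iso) ((ker_pointAction iso).trans_ne hN_ne_bot)
    (odd_choose_two (by omega))

/-- **(Guralnick–Liebeck, Corollary 4.4.)** Let `k ≥ 7` with `k ≡ 3 (mod 4)`, and let
`M = P₃ ≅ S^(k-2,2) (mod 2)` be the reduction mod 2 of the Specht module `S^(k-2,2)`,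
realized as the summand `(P₁+P₂)^⊥` of the `𝔽₂ A_k`-permutation module on 2-subsets.
Every nonsplit extension `1 → M → H → A_k → 1` (identified via an isomorphism
`e : N ≃ M` that is equivariant for the conjugation action of `H` and the `A_k`-module
structure of `M`) has a faithful transitive permutation representation of degree
`2k(k-1)`, i.e. `H` has a corefree subgroup of index `2k(k-1)`. -/
theorem nonsplit_extension_by_S_k22_has_perm_rep
    (k : ℕ) (hk : 7 ≤ k) (hmod : k % 4 = 3)
    (H : Type*) [Group H] [Finite H]
    (N : Subgroup H) [hN : N.Normal]
    (iso : H ⧸ N ≃* alternatingGroup (Fin k))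
    (e : N ≃* Multiplicative (perpSub (ZMod 2) (P1 k ⊔ P2 k)))
    (hequiv : ∀ (h : H) (n : N),
      Multiplicative.toAdd (e ⟨h * (n : H) * h⁻¹, hN.conj_mem _ n.2 h⟩)
        = P3Rep k (iso (QuotientGroup.mk' N h)) (Multiplicative.toAdd (e n)))
    (nonsplit : ¬ ∃ K : Subgroup H, N.IsComplement' K) :
    ∃ H₀ : Subgroup H, H₀.index = 2 * (k * (k - 1)) ∧ H₀.normalCore = ⊥ :=
  nonsplit_extension_by_S_k22_has_perm_rep_general k (by omega) (Or.inr hmod) H N iso e hequiv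
end

section
/- Let G = A_k with k > 20, and let H₀ be a subgroup of a group H with normal subgroup M such that H/M = G, the image π(H₀) of H₀ in G has index less than k(k-1)/2 in G... Specifically: every proper subgroup of A_k (k > 20) of index less than k(k-1)/2 is the stabilizer A_{k-1} of a point, i.e., any subgroup of A_k of index strictly between 1 and k(k-1)/2 has index k and is a point stabilizer. -/
/-!
Let `K` be a proper subgroup of the alternating group on `n > 20` points, of index less than
`n.choose 2`. Link two points when some three-cycle of `K` maps one to the other. This is a
`K`-invariant equivalence relation, and `K` contains every even permutation supported on a single
class. Bochert's argument applies both to the complement of a transversal and to the transversal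
itself: a set of about `n / 2` points supporting no three-cycle of `K` forces the index in the
symmetric group to be at least about `(n / 4)!`, and a three-cycle supported off the transversal
produces a class `B` of at least four points.

The classes `K` carries `B` to are disjoint, so there are at most `n / |B|` of them, whereas the
alternating group permutes all `|B|`-subsets transitively. Counting translates of `B` bounds the
index below by `n.choose 2` unless `B` misses at most one point `i`. Then `K` contains the
stabilizer of `i`, which is a maximal subgroup.
-/

open Equiv Equiv.Perm MulAction
open scoped Nat Pointwise commutatorElement

section Binomial

theorem choose_le_choose_of_add_le {n r s : ℕ} (hrs : r ≤ s) (hn : r + s ≤ n) :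
    n.choose r ≤ n.choose s := by
  refine Nat.le_of_mul_le_mul_right ?_ (Nat.choose_pos hrs)
  calc n.choose r * s.choose r = n.choose r * s.choose (s - r) := by rw [Nat.choose_symm hrs]
    _ ≤ n.choose r * (n - r).choose (s - r) := by
      gcongr
      omega
    _ = n.choose s * s.choose r := (Nat.choose_mul hrs).symm

theorem succ_choose_two_le_choose_three {n : ℕ} (hn : 8 ≤ n) :
    (n + 1).choose 2 ≤ n.choose 3 := by
  have h : n ≤ n.choose 2 := by
    simpa using choose_le_choose_of_add_le (n := n) (r := 1) (s := 2) (by omega) (by omega)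
  refine Nat.le_of_mul_le_mul_right ?_ three_pos
  calc (n + 1).choose 2 * 3 = n * 3 + n.choose 2 * 3 := by
        rw [Nat.choose_succ_succ' n 1, Nat.choose_one_right, add_mul]
    _ ≤ n.choose 2 * 3 + n.choose 2 * 3 := by gcongr
    _ = n.choose 2 * 6 := by ring
    _ ≤ n.choose 2 * (n - 2) := by
        gcongr
        omega
    _ = n.choose 3 * 3 := (Nat.choose_succ_right_eq n 2).symm

theorem choose_two_le_of_choose_le_mul {n b o m : ℕ} (hn : 9 ≤ n) (hb : 4 ≤ b) (hbn : b + 2 ≤ n)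
    (hob : o * b ≤ n) (hm : n.choose b ≤ o * m) : n.choose 2 ≤ m := by
  rcases le_or_gt o 1 with ho | ho
  · calc n.choose 2 ≤ n.choose b := choose_le_choose_of_add_le (by omega) (by omega)
      _ ≤ o * m := hm
      _ ≤ 1 * m := by gcongr
      _ = m := one_mul m
  · have h2b : 2 * b ≤ n := le_trans (by gcongr; omega) hob
    obtain ⟨l, rfl⟩ : ∃ l, n = l + 1 := ⟨n - 1, by omega⟩
    refine Nat.le_of_mul_le_mul_left ?_ l.succ_pos
    calc (l + 1) * (l + 1).choose 2 ≤ (l + 1) * l.choose 3 := by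
          gcongr
          exact succ_choose_two_le_choose_three (by omega)
      _ = (l + 1).choose 4 * 4 := Nat.add_one_mul_choose_eq l 3
      _ ≤ (l + 1).choose b * b := by
          gcongr
          exact choose_le_choose_of_add_le hb (by omega)
      _ ≤ o * m * b := by gcongr
      _ = o * b * m := by ring
      _ ≤ (l + 1) * m := by gcongr

theorem two_mul_choose_two_le_factorial {q : ℕ} (hq : 6 ≤ q) : 2 * (4 * q).choose 2 ≤ q ! := by
  induction q, hq using Nat.le_induction with
  | base => decide
  | succ q hq ih =>
    have h : 4 * q ≤ (4 * q).choose 2 := by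
      simpa using choose_le_choose_of_add_le (n := 4 * q) (r := 1) (s := 2) (by omega) (by omega)
    calc 2 * (4 * (q + 1)).choose 2 = 2 * (4 * q).choose 2 + (32 * q + 12) := by
          simp [mul_add, Nat.choose_succ_succ']
          ring
      _ ≤ 7 * (2 * (4 * q).choose 2) := by omega
      _ ≤ (q + 1) * q ! := by
          gcongr
          omega
      _ = (q + 1)! := (Nat.factorial_succ q).symm

theorem two_mul_choose_two_le_factorial_div {n : ℕ} (hn : 20 < n) :
    2 * n.choose 2 ≤ ((n + 3) / 4)! := by
  refine le_trans ?_ (two_mul_choose_two_le_factorial (by omega))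
  gcongr
  omega

end Binomial

section Index

theorem card_le_index_of_disjoint {G : Type*} [Group G] {H L : Subgroup G} [H.FiniteIndex]
    (h : Disjoint H L) : Nat.card L ≤ H.index := by
  rw [← L.relIndex_bot_left, ← h.eq_bot, Subgroup.inf_relIndex_right, ← H.relIndex_top_right]
  exact Subgroup.relIndex_le_of_le_right le_top (by simpa using Subgroup.FiniteIndex.index_ne_zero)

theorem index_stabilizer_dvd_ncard_orbit_mul_index {G X : Type*} [Group G] [MulAction G X]
    (K : Subgroup G) (x : X) : (stabilizer G x).index ∣ (orbit K x).ncard * K.index := by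
  have h : (stabilizer G x).relIndex K = (orbit K x).ncard := index_stabilizer K x
  rw [← h, ← Subgroup.inf_relIndex_right, Subgroup.relIndex_mul_index inf_le_right]
  exact Subgroup.index_dvd_of_le inf_le_left

theorem ncard_orbit_mul_ncard_le_of_isBlock {G X : Type*} [Group G] [MulAction G X] [Finite X]
    {B : Set X} (hB : IsBlock G B) : (orbit G B).ncard * B.ncard ≤ Nat.card X := by
  classical
  have := Fintype.ofFinite X
  have hdisj : ((orbit G B).toFinset : Set (Set X)).PairwiseDisjoint fun S ↦ S.toFinset := by
    rw [Set.coe_toFinset]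
    exact (isBlock_iff_pairwiseDisjoint_range_smul.1 hB).imp fun S T h ↦ Set.disjoint_toFinset.2 h
  have hcard : ∀ S ∈ (orbit G B).toFinset, S.toFinset.card = B.ncard := by
    intro S hS
    obtain ⟨g, rfl⟩ := Set.mem_toFinset.1 hS
    rw [← Set.ncard_eq_toFinset_card']
    exact Set.ncard_smul_set g B
  calc (orbit G B).ncard * B.ncard = ∑ S ∈ (orbit G B).toFinset, S.toFinset.card := by
        rw [Finset.sum_const_nat hcard, Set.ncard_eq_toFinset_card']
    _ = ((orbit G B).toFinset.biUnion fun S ↦ S.toFinset).card := (Finset.card_biUnion hdisj).symm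
    _ ≤ Nat.card X := by
        rw [Nat.card_eq_fintype_card]
        exact Finset.card_le_univ _

end Index

section Commutator

variable {α : Type*} [DecidableEq α]

theorem commutatorElement_eq_swap_mul_swap {g h : Perm α} {a : α}
    (hg : g a ≠ a) (hh : h a ≠ a) (hgh : ∀ x ≠ a, g x = x ∨ h x = x) :
    ⁅g, h⁆ = swap a (g a) * swap (g a) (h a) := by
  have hhg : h (g a) = g a := (hgh _ hg).resolve_left (g.injective.ne hg)
  set s := swap a (g a)
  have hu : Commute (s * g) h := by
    refine Disjoint.commute fun x ↦ ?_
    rcases eq_or_ne x a with rfl | hxa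
    · simp [s]
    · refine (hgh x hxa).imp_left fun hgx ↦ ?_
      have : x ≠ g a := by
        rintro rfl
        exact hg (g.injective hgx)
      simp [s, hgx, swap_apply_of_ne_of_ne hxa this]
  have hg_eq : g = s * (s * g) := by simp [s, ← mul_assoc]
  calc ⁅g, h⁆ = s * ((s * g) * h) * (s * g)⁻¹ * s⁻¹ * h⁻¹ := by
        rw [commutatorElement_def]
        nth_rw 1 2 [hg_eq]
        group
    _ = s * (h * s * h⁻¹) := by
        rw [hu.eq]
        simp [s, mul_assoc]
    _ = s * swap (g a) (h a) := by
        rw [← swap_apply_apply, hhg, swap_comm]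

theorem swap_mul_swap_mem_of_mem {H : Subgroup (Perm α)}
    {g h : Perm α} {a : α} (hgH : g ∈ H) (hhH : h ∈ H) (hg : g a ≠ a) (hh : h a ≠ a)
    (hgh : ∀ x ≠ a, g x = x ∨ h x = x) : swap a (g a) * swap (g a) (h a) ∈ H := by
  rw [← commutatorElement_eq_swap_mul_swap hg hh hgh]
  exact H.mul_mem (H.mul_mem (H.mul_mem hgH hhH) (H.inv_mem hgH)) (H.inv_mem hhH)

end Commutator

section Alternating

variable {α : Type*} [Fintype α] [DecidableEq α]

theorem index_stabilizer_alternatingGroup (hα : 3 ≤ Nat.card α) (S : Set α) :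
    (stabilizer (alternatingGroup α) S).index = (Nat.card α).choose S.ncard := by
  lift S to Finset α using S.toFinite
  have := Set.powersetCard.isPretransitive_alternatingGroup (n := S.card) hα
  have hS : stabilizer (alternatingGroup α) (Set.powersetCard.ofCard (s := S) rfl) =
      stabilizer (alternatingGroup α) (S : Set α) := Set.powersetCard.stabilizer_coe _
  rw [← hS, index_stabilizer_of_transitive, Set.powersetCard.card, Set.ncard_coe_finset]

theorem choose_two_le_index_of_isBlock {K : Subgroup (alternatingGroup α)} {B : Set α}
    (hα : 9 ≤ Nat.card α) (hB : IsBlock K B) (hB4 : 4 ≤ B.ncard)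
    (hB2 : B.ncard + 2 ≤ Nat.card α) : (Nat.card α).choose 2 ≤ K.index := by
  refine choose_two_le_of_choose_le_mul hα hB4 hB2 (ncard_orbit_mul_ncard_le_of_isBlock hB) ?_
  rw [← index_stabilizer_alternatingGroup (by omega) B]
  refine Nat.le_of_dvd (Nat.mul_pos ?_ (Nat.pos_of_ne_zero Subgroup.index_ne_zero_of_finite))
    (index_stabilizer_dvd_ncard_orbit_mul_index K B)
  exact (Set.ncard_pos (Set.toFinite _)).2 (nonempty_orbit B)

end Alternating

section ThreeCycle

variable {α : Type*} [Fintype α] [DecidableEq α]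

theorem isThreeCycle_conj {σ : Perm α} (hσ : σ.IsThreeCycle) (g : Perm α) :
    (g * σ * g⁻¹).IsThreeCycle :=
  cycleType_conj.trans hσ

theorem apply_apply_apply_of_isThreeCycle {σ : Perm α} (hσ : σ.IsThreeCycle) (a : α) :
    σ (σ (σ a)) = a := by
  have h : σ ^ 3 = 1 := hσ.orderOf ▸ pow_orderOf_eq_one σ
  exact DFunLike.congr_fun h a

theorem eq_or_eq_or_eq_of_isThreeCycle {σ : Perm α} (hσ : σ.IsThreeCycle) {a x : α}
    (ha : σ a ≠ a) (hx : σ x ≠ x) : x = a ∨ x = σ a ∨ x = σ (σ a) := by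
  rw [← mem_support, hσ.support_eq_iff_mem_support.2 (mem_support.2 ha)] at hx
  simpa using hx

theorem eq_of_isThreeCycle_of_apply_eq {σ τ : Perm α} {a : α} (hσ : σ.IsThreeCycle)
    (hτ : τ.IsThreeCycle) (ha : σ a ≠ a) (h₁ : τ a = σ a) (h₂ : τ (σ a) = σ (σ a)) : τ = σ := by
  rw [hσ.eq_swap_mul_swap_iff_mem_support.2 (mem_support.2 ha),
    hτ.eq_swap_mul_swap_iff_mem_support.2 (mem_support.2 (h₁ ▸ ha)), h₁, h₂]

/-- The relation linking each point of `α` to its images under the three-cycles of `H`. Every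
even permutation supported on one of its classes belongs to `H`. -/
def threeCycleSetoid (H : Subgroup (Perm α)) : Setoid α where
  r x y := x = y ∨ ∃ σ ∈ H, σ.IsThreeCycle ∧ σ x = y
  iseqv := by
    refine ⟨fun x ↦ .inl rfl, ?_, ?_⟩
    · rintro x _ (rfl | ⟨σ, hσH, hσ, rfl⟩)
      · exact .inl rfl
      · exact .inr ⟨σ⁻¹, H.inv_mem hσH, hσ.inv, by simp⟩
    · rintro x _ _ (rfl | ⟨σ, hσH, hσ, rfl⟩) (rfl | ⟨τ, hτH, hτ, rfl⟩)
      · exact .inl rfl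
      · exact .inr ⟨τ, hτH, hτ, rfl⟩
      · exact .inr ⟨σ, hσH, hσ, rfl⟩
      by_cases hτσ : τ (σ x) = σ x
      · exact .inr ⟨σ, hσH, hσ, hτσ.symm⟩
      by_cases hτx : τ x = x
      · refine .inr ⟨τ * σ * τ⁻¹, H.mul_mem (H.mul_mem hτH hσH) (H.inv_mem hτH),
          isThreeCycle_conj hσ τ, ?_⟩
        rw [mul_apply, mul_apply, inv_eq_iff_eq.2 hτx.symm]
      rcases eq_or_eq_or_eq_of_isThreeCycle hτ hτσ hτx with hx | hx | hx
      · exact .inr ⟨τ, hτH, hτ, congrArg τ hx⟩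
      · exact .inl hx
      · exact .inr ⟨τ⁻¹, H.inv_mem hτH, hτ.inv, inv_eq_iff_eq.2 hx⟩

variable {H : Subgroup (Perm α)} {x y : α}

theorem threeCycleSetoid_apply_of_mem {g : Perm α} (hg : g ∈ H) (hxy : threeCycleSetoid H x y) :
    threeCycleSetoid H (g x) (g y) := by
  rcases hxy with rfl | ⟨σ, hσH, hσ, rfl⟩
  · exact .inl rfl
  · exact .inr ⟨g * σ * g⁻¹, H.mul_mem (H.mul_mem hg hσH) (H.inv_mem hg), isThreeCycle_conj hσ g,
      by simp⟩

/-- The equivalence class of `x` for `threeCycleSetoid H`. -/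
def threeCycleClass (H : Subgroup (Perm α)) (x : α) : Set α :=
  {y | threeCycleSetoid H x y}

theorem smul_threeCycleClass {g : Perm α} (hg : g ∈ H) (x : α) :
    g • threeCycleClass H x = threeCycleClass H (g x) := by
  ext y
  rw [Set.mem_smul_set_iff_inv_smul_mem]
  refine ⟨fun hy ↦ ?_, fun hy ↦ ?_⟩
  · simpa [threeCycleClass] using threeCycleSetoid_apply_of_mem hg hy
  · simpa [threeCycleClass] using threeCycleSetoid_apply_of_mem (H.inv_mem hg) hy

theorem threeCycleClass_eq_of_mem (hy : y ∈ threeCycleClass H x) :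
    threeCycleClass H y = threeCycleClass H x := by
  ext z
  exact ⟨(threeCycleSetoid H).trans' hy,
    (threeCycleSetoid H).trans' ((threeCycleSetoid H).symm' hy)⟩

theorem isBlock_threeCycleClass (H : Subgroup (Perm α)) (x : α) :
    IsBlock H (threeCycleClass H x) := by
  rw [isBlock_iff_smul_eq_smul_of_nonempty]
  rintro g₁ g₂ ⟨y, hy₁, hy₂⟩
  have h₁ : g₁ • threeCycleClass H x = threeCycleClass H (g₁ • x) := smul_threeCycleClass g₁.2 x
  have h₂ : g₂ • threeCycleClass H x = threeCycleClass H (g₂ • x) := smul_threeCycleClass g₂.2 x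
  rw [h₁] at hy₁ ⊢
  rw [h₂] at hy₂ ⊢
  rw [← threeCycleClass_eq_of_mem hy₁, threeCycleClass_eq_of_mem hy₂]

theorem support_subset_threeCycleClass {σ : Perm α} (hσH : σ ∈ H) (hσ : σ.IsThreeCycle)
    (hx : x ∈ σ.support) : (σ.support : Set α) ⊆ threeCycleClass H x := by
  have hσx : threeCycleSetoid H x (σ x) := .inr ⟨σ, hσH, hσ, rfl⟩
  intro y hy
  obtain rfl | rfl | rfl :=
    eq_or_eq_or_eq_of_isThreeCycle hσ (mem_support.1 hx) (mem_support.1 hy)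
  · exact (threeCycleSetoid H).refl' _
  · exact hσx
  · exact (threeCycleSetoid H).trans' hσx (threeCycleSetoid_apply_of_mem hσH hσx)

theorem mem_of_isThreeCycle_of_apply_eq {σ ρ τ : Perm α} {a : α} (hσ : σ.IsThreeCycle)
    (hρH : ρ ∈ H) (hρ : ρ.IsThreeCycle) (hτH : τ ∈ H) (hτ : τ.IsThreeCycle) (ha : σ a ≠ a)
    (hρa : ρ a = σ a) (hτb : τ (σ a) = σ (σ a)) : σ ∈ H := by
  have hσa := apply_apply_apply_of_isThreeCycle hσ a
  have hb : σ (σ a) ≠ σ a := σ.injective.ne ha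
  by_cases hρb : ρ (σ a) = σ (σ a)
  · rwa [← eq_of_isThreeCycle_of_apply_eq hσ hρ ha hρa hρb]
  by_cases hτc : τ (σ (σ a)) = a
  · rwa [← eq_of_isThreeCycle_of_apply_eq hσ hτ hb hτb (hτc.trans hσa.symm)]
  have hτa : τ a = a := by
    by_contra hτa
    have := eq_or_eq_or_eq_of_isThreeCycle hτ (hτb ▸ hb) hτa
    grind
  have hρinv : ρ⁻¹ (σ a) = a := inv_eq_iff_eq.2 hρa.symm
  have hρa' : ρ a ≠ a := hρa ▸ ha
  have hτb' : τ (σ a) ≠ σ a := hτb ▸ hb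
  have hρ3 := apply_apply_apply_of_isThreeCycle hρ a
  have hτ3 := apply_apply_apply_of_isThreeCycle hτ (σ a)
  by_cases hτρb : τ (ρ (σ a)) = σ a
  · have hconj : τ * ρ⁻¹ * τ⁻¹ = σ := by
      refine eq_of_isThreeCycle_of_apply_eq hσ (isThreeCycle_conj hρ.inv τ) ha ?_ ?_
      · have : ρ⁻¹ a = ρ (σ a) := inv_eq_iff_eq.2 (by rw [← hρa, hρ3])
        rw [mul_apply, mul_apply, inv_eq_iff_eq.2 hτa.symm, this, hτρb]
      · rw [mul_apply, mul_apply, inv_eq_iff_eq.2 hτρb.symm, inv_eq_iff_eq.2 rfl, hτb]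
    exact hconj ▸ H.mul_mem (H.mul_mem hτH (H.inv_mem hρH)) (H.inv_mem hτH)
  · have hdisj : ∀ x ≠ σ a, τ x = x ∨ ρ⁻¹ x = x := by
      intro x hx
      by_contra! hne
      -- The supports `{a, σ a, ρ (σ a)}` and `{σ a, σ (σ a), τ (σ (σ a))}` meet only in `σ a`.
      have hρx : ρ x ≠ x := fun e ↦ hne.2 (inv_eq_iff_eq.2 e.symm)
      have := eq_or_eq_or_eq_of_isThreeCycle hρ hρa' hρx
      have := eq_or_eq_or_eq_of_isThreeCycle hτ hτb' hne.1
      grind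
    have hσ_eq : σ = swap (σ a) (τ (σ a)) * swap (τ (σ a)) (ρ⁻¹ (σ a)) := by
      rw [hρinv, hτb, ← hσa]
      simpa only [hσa] using hσ.eq_swap_mul_swap_iff_mem_support.2 (mem_support.2 hb)
    rw [hσ_eq]
    exact swap_mul_swap_mem_of_mem hτH (H.inv_mem hρH) hτb' (by rwa [hρinv, ne_comm]) hdisj

theorem mem_of_isThreeCycle_of_forall_threeCycleSetoid {σ : Perm α} (hσ : σ.IsThreeCycle)
    (h : ∀ a ∈ σ.support, threeCycleSetoid H a (σ a)) : σ ∈ H := by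
  obtain ⟨a, ha⟩ := hσ.isCycle.nonempty_support
  have hb := apply_mem_support.2 ha
  obtain hab | ⟨ρ, hρH, hρ, hρa⟩ := h a ha
  · exact absurd hab.symm (mem_support.1 ha)
  obtain hbc | ⟨τ, hτH, hτ, hτb⟩ := h (σ a) hb
  · exact absurd hbc.symm (mem_support.1 hb)
  exact mem_of_isThreeCycle_of_apply_eq hσ hρH hρ hτH hτ (mem_support.1 ha) hρa hτb

theorem mem_of_mem_alternatingGroup_of_support_subset {g : Perm α} (hg : g ∈ alternatingGroup α)
    (hgx : ∀ y, g y ≠ y → y ∈ threeCycleClass H x) : g ∈ H := by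
  have h : g ∈ (alternatingGroup g.support).map (ofSubtype : Perm g.support →* Perm α) := by
    rw [alternatingGroup.map_ofSubtype]
    exact ⟨mem_range_ofSubtype_iff.2 fun y hy ↦ hy, hg⟩
  rw [← closure_three_cycles_eq_alternating, MonoidHom.map_closure] at h
  refine (Subgroup.closure_le H).2 ?_ h
  rintro _ ⟨σ, hσ, rfl⟩
  have hmem : ∀ y ∈ (ofSubtype σ).support, y ∈ threeCycleClass H x := by
    intro y hy
    obtain ⟨hyg, -⟩ := (mem_support_ofSubtype y σ).1 hy
    exact hgx y (mem_support.1 hyg)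
  refine mem_of_isThreeCycle_of_forall_threeCycleSetoid (cycleType_ofSubtype.trans hσ)
    fun y hy ↦ ?_
  exact (threeCycleSetoid H).trans' ((threeCycleSetoid H).symm' (hmem y hy))
    (hmem _ (apply_mem_support.2 hy))

end ThreeCycle

section Bochert

variable {α : Type*} [Fintype α] [DecidableEq α] {H : Subgroup (Perm α)}

theorem factorial_card_le_index {Γ : Finset α} (h : ∀ g ∈ H, g.support ⊆ Γ → g = 1) :
    Γ.card ! ≤ H.index := by
  have hcard : Nat.card (ofSubtype : Perm Γ →* Perm α).range = Γ.card ! := by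
    rw [← Nat.card_congr (MonoidHom.ofInjective ofSubtype_injective).toEquiv, Nat.card_perm]
    simp
  rw [← hcard]
  refine card_le_index_of_disjoint (Subgroup.disjoint_def.2 fun hg hgΓ ↦ h _ hg ?_)
  simpa using mem_range_ofSubtype_iff.1 hgΓ

theorem exists_isThreeCycle_mem_of_support_inter_eq_singleton {g h : Perm α} {a : α} (hgH : g ∈ H)
    (hhH : h ∈ H) (hgh : g.support ∩ h.support = {a}) :
    ∃ σ ∈ H, σ.IsThreeCycle ∧ σ.support ⊆ g.support ∪ h.support := by
  have hinter {x : α} (hxg : x ∈ g.support) (hxh : x ∈ h.support) : x = a :=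
    Finset.mem_singleton.1 (hgh ▸ Finset.mem_inter.2 ⟨hxg, hxh⟩)
  have hfix : ∀ x ≠ a, g x = x ∨ h x = x := by
    intro x hx
    by_contra! hne
    exact hx (hinter (mem_support.2 hne.1) (mem_support.2 hne.2))
  obtain ⟨hag, hah⟩ : a ∈ g.support ∧ a ∈ h.support :=
    Finset.mem_inter.1 (hgh ▸ Finset.mem_singleton_self a)
  have hgag := apply_mem_support.2 hag
  have hhah := apply_mem_support.2 hah
  rw [mem_support] at hag hah
  have hne : g a ≠ h a := fun e ↦ hag (hinter hgag (e ▸ hhah))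
  refine ⟨swap a (g a) * swap (g a) (h a), swap_mul_swap_mem_of_mem hgH hhH hag hah hfix, ?_, ?_⟩
  · rw [swap_comm a]
    exact isThreeCycle_swap_mul_swap_same hag hne hah.symm
  · rw [support_swap_mul_swap (by simp [hag.symm, hah.symm, hne])]
    simp [-mem_support, Finset.insert_subset_iff, mem_support.2 hag, hgag, hhah]

theorem exists_isThreeCycle_mem_of_index_lt {Δ : Finset α} {q : ℕ} (hΔ : 2 * q ≤ Δ.card + 1)
    (hq : H.index < q !) : ∃ σ ∈ H, σ.IsThreeCycle ∧ σ.support ⊆ Δ := by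
  -- If `Γ ⊆ Δ` is maximal among the sets carrying only the identity of `H`, then so many points of
  -- `Δ` lie outside `Γ` that some `g ≠ 1` in `H` lives on `Δ \ Γ`. For `γ` moved by `g`,
  -- maximality gives `h ≠ 1` in `H` living on `insert γ Γ`, and the supports meet only in `γ`.
  obtain ⟨Γ, -, hΓ⟩ := Finite.exists_le_maximal
    (p := fun Γ : Finset α ↦ Γ ⊆ Δ ∧ ∀ g ∈ H, g.support ⊆ Γ → g = 1) (a := ∅) (by simp)
  have hΓq : Γ.card < q := by
    by_contra! h
    exact ((Nat.factorial_le h).trans (factorial_card_le_index hΓ.prop.2)).not_gt hq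
  obtain ⟨g, hgH, hgΔ, hg⟩ : ∃ g ∈ H, g.support ⊆ Δ \ Γ ∧ g ≠ 1 := by
    by_contra! h
    have hcard := Finset.card_sdiff_add_card_eq_card hΓ.prop.1
    exact ((Nat.factorial_le (by omega)).trans (factorial_card_le_index h)).not_gt hq
  obtain ⟨γ, hγ⟩ := Finset.nonempty_iff_ne_empty.2 (support_eq_empty_iff.not.2 hg)
  obtain ⟨hγΔ, hγΓ⟩ := Finset.mem_sdiff.1 (hgΔ hγ)
  obtain ⟨h, hhH, hhΓ, hh⟩ : ∃ h ∈ H, h.support ⊆ insert γ Γ ∧ h ≠ 1 := by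
    by_contra! h
    exact hγΓ (hΓ.le_of_ge ⟨Finset.insert_subset hγΔ hΓ.prop.1, h⟩ (Finset.subset_insert _ _)
      (Finset.mem_insert_self _ _))
  have hγh : γ ∈ h.support := by
    by_contra hγh
    exact hh (hΓ.prop.2 h hhH ((Finset.subset_insert_iff_of_notMem hγh).1 hhΓ))
  have hinter : g.support ∩ h.support = {γ} := by
    ext x
    have hxg := @hgΔ x
    have hxh := @hhΓ x
    grind
  obtain ⟨σ, hσH, hσ, hσgh⟩ := exists_isThreeCycle_mem_of_support_inter_eq_singleton hgH hhH hinter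
  exact ⟨σ, hσH, hσ, hσgh.trans (Finset.union_subset (hgΔ.trans Finset.sdiff_subset)
    (hhΓ.trans (Finset.insert_subset hγΔ hΓ.prop.1)))⟩

end Bochert

section Main

variable {α : Type*} [Fintype α] [DecidableEq α]

theorem exists_four_le_ncard_threeCycleClass {H : Subgroup (Perm α)}
    (hH : H.index < ((Nat.card α + 3) / 4)!) : ∃ x, 4 ≤ (threeCycleClass H x).ncard := by
  let rep (x : α) : α := (Quotient.mk (threeCycleSetoid H) x).out
  have hrep (x : α) : rep x ∈ threeCycleClass H x :=
    (threeCycleSetoid H).symm' (Quotient.mk_out (s := threeCycleSetoid H) x)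
  have hrep_eq {x y : α} (h : threeCycleSetoid H x y) : rep x = rep y :=
    congrArg Quotient.out (Quotient.sound h)
  let Δ : Finset α := {x | rep x = x}
  have hcard := Δ.card_add_card_compl
  rw [← Nat.card_eq_fintype_card] at hcard
  obtain hΔ | hΔ : 2 * ((Nat.card α + 3) / 4) ≤ Δ.card + 1 ∨
      2 * ((Nat.card α + 3) / 4) ≤ Δᶜ.card + 1 := by omega
  · obtain ⟨σ, hσH, hσ, hσΔ⟩ := exists_isThreeCycle_mem_of_index_lt hΔ hH
    obtain ⟨a, ha⟩ := hσ.isCycle.nonempty_support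
    have hσa : σ a = a := by
      calc σ a = rep (σ a) := (Finset.mem_filter.1 (hσΔ (apply_mem_support.2 ha))).2.symm
        _ = rep a := (hrep_eq (.inr ⟨σ, hσH, hσ, rfl⟩)).symm
        _ = a := (Finset.mem_filter.1 (hσΔ ha)).2
    exact absurd hσa (mem_support.1 ha)
  · obtain ⟨σ, hσH, hσ, hσΔ⟩ := exists_isThreeCycle_mem_of_index_lt hΔ hH
    obtain ⟨a, ha⟩ := hσ.isCycle.nonempty_support
    have hrepa : rep a ∉ σ.support := fun h ↦
      Finset.mem_compl.1 (hσΔ h) (by simpa [Δ] using (hrep_eq (hrep a)).symm)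
    refine ⟨a, ?_⟩
    calc 4 = (insert (rep a) σ.support).card := by
          rw [Finset.card_insert_of_notMem hrepa, hσ.card_support]
      _ = ((insert (rep a) σ.support : Finset α) : Set α).ncard := (Set.ncard_coe_finset _).symm
      _ ≤ (threeCycleClass H a).ncard := by
          refine Set.ncard_le_ncard ?_
          rw [Finset.coe_insert]
          exact Set.insert_subset (hrep a) (support_subset_threeCycleClass hσH hσ ha)

theorem stabilizer_le_of_compl_singleton_subset_threeCycleClass {K : Subgroup (alternatingGroup α)}
    {i x : α} (h : {i}ᶜ ⊆ threeCycleClass (K.map (alternatingGroup α).subtype) x) :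
    stabilizer (alternatingGroup α) i ≤ K := by
  intro g hg
  refine (Subgroup.mem_map_iff_mem (alternatingGroup α).subtype_injective).1 ?_
  refine mem_of_mem_alternatingGroup_of_support_subset (x := x) g.2 fun y hy ↦ h ?_
  rintro rfl
  exact hy hg

theorem eq_stabilizer_of_stabilizer_le {K : Subgroup (alternatingGroup α)} {i : α}
    (hα : 3 ≤ Nat.card α) (hK : K ≠ ⊤) (hi : stabilizer (alternatingGroup α) i ≤ K) :
    K = stabilizer (alternatingGroup α) i := by
  have : Nontrivial α := Finite.one_lt_card_iff_nontrivial.1 (by omega)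
  have := alternatingGroup.isPreprimitive_of_three_le_card α hα
  have hcoatom := IsPreprimitive.isCoatom_stabilizer_of_isPreprimitive (alternatingGroup α) i
  exact (hcoatom.le_iff.1 hi).resolve_left hK

theorem exists_compl_singleton_subset_threeCycleClass {K : Subgroup (alternatingGroup α)}
    (hα : 20 < Nat.card α) (hindex : K.index < (Nat.card α).choose 2) :
    ∃ i x, {i}ᶜ ⊆ threeCycleClass (K.map (alternatingGroup α).subtype) x := by
  have : Nontrivial α := Finite.one_lt_card_iff_nontrivial.1 (by omega)
  set H := K.map (alternatingGroup α).subtype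
  have hH : H.index < ((Nat.card α + 3) / 4)! := by
    refine lt_of_lt_of_le ?_ (two_mul_choose_two_le_factorial_div hα)
    rw [Subgroup.index_map_subtype, alternatingGroup.index_eq_two]
    omega
  obtain ⟨x, hx⟩ := exists_four_le_ncard_threeCycleClass hH
  have hblock : IsBlock K (threeCycleClass H x) := fun g₁ g₂ h ↦
    isBlock_threeCycleClass H x (g₁ := ⟨g₁, Subgroup.mem_map_of_mem _ g₁.2⟩)
      (g₂ := ⟨g₂, Subgroup.mem_map_of_mem _ g₂.2⟩) h
  have hlarge : Nat.card α < (threeCycleClass H x).ncard + 2 := by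
    by_contra! hsmall
    exact (choose_two_le_index_of_isBlock (by omega) hblock hx hsmall).not_gt hindex
  have hcompl : (threeCycleClass H x)ᶜ.ncard ≤ 1 := by
    have := Set.ncard_add_ncard_compl (threeCycleClass H x)
    omega
  have : Nonempty α := ⟨x⟩
  obtain ⟨i, hi⟩ := (Set.ncard_le_one_iff_subset_singleton (Set.toFinite _)).1 hcompl
  exact ⟨i, x, Set.compl_subset_comm.1 hi⟩

theorem subgroup_of_alternating_small_index_is_point_stabilizer_general
    (hα : 20 < Nat.card α) (K : Subgroup (alternatingGroup α)) (hK : K ≠ ⊤)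
    (hindex : K.index < (Nat.card α).choose 2) :
    K.index = Nat.card α ∧ ∃ i : α,
      K = Subgroup.comap (alternatingGroup α).subtype (stabilizer (Perm α) i) := by
  obtain ⟨i, x, hx⟩ := exists_compl_singleton_subset_threeCycleClass hα hindex
  have hKi : K = stabilizer (alternatingGroup α) i :=
    eq_stabilizer_of_stabilizer_le (by omega) hK
      (stabilizer_le_of_compl_singleton_subset_threeCycleClass hx)
  have := alternatingGroup.isPretransitive_of_three_le_card α (by omega)
  exact ⟨by rw [hKi, index_stabilizer_of_transitive], i, hKi⟩

end Main

/-- **(Classical; cf. Liebeck, Lemma 1.1.)** For `k > 20`, every proper subgroup of `A_k`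
of index strictly less than `k(k-1)/2` is a point stabilizer (isomorphic to `A_{k-1}`):
it has index exactly `k` and equals the stabilizer of some point `i ∈ {1,…,k}`. -/
theorem subgroup_of_alternating_small_index_is_point_stabilizer
    (k : ℕ) (hk : 20 < k)
    (K : Subgroup (alternatingGroup (Fin k))) (hK : K ≠ ⊤)
    (hindex : K.index < k * (k - 1) / 2) :
    K.index = k ∧ ∃ i : Fin k,
      K = Subgroup.comap (alternatingGroup (Fin k)).subtype
            (MulAction.stabilizer (Equiv.Perm (Fin k)) i) := by
  simpa only [Nat.card_fin] using
    subgroup_of_alternating_small_index_is_point_stabilizer_general (by simpa using hk) K hK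
      (by rwa [Nat.card_fin, Nat.choose_two_right])
end
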